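/- Let n ≥ 0, ℓ ≥ 1, let κ ∈ Z^ℓ be any multicharge, let e ≥ 2 be an integer, let λ be an ℓ-multipartition of n and let i ∈ (Z/eZ)^n. Then deg_{e,i}(λ) = Σ_{t ∈ Std(λ), res(t) = i} deg_e(t) ≥ 0. -/

import Mathlib

open scoped BigOperators
open scoped Classical

namespace Paper

/-! ## Quantum integers -/

/-- The quantum integer `[d]_x` in a field, for `d ∈ ℤ`. -/
noncomputable def qint {K : Type*} [Field K] (x : K) (d : ℤ) : K :=
  if 0 ≤ d then ∑ k ∈ Finset.range d.toNat, x ^ k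
  else -∑ k ∈ Finset.range (-d).toNat, x ^ (-((k : ℤ) + 1))

/-- The quantum integer `[d]_t` in a commutative ring, for an invertible `t` and `d ∈ ℤ`. -/
def qintU {O : Type*} [CommRing O] (t : Oˣ) (d : ℤ) : O :=
  if 0 ≤ d then ∑ k ∈ Finset.range d.toNat, (t : O) ^ k
  else -∑ k ∈ Finset.range (-d).toNat, ((t ^ (-((k : ℤ) + 1)) : Oˣ) : O)

/-! ## Nodes, multipartitions and standard tableaux -/

/-- A node `(l, r, c)`: component `l`, row `r`, column `c` (all `0`-based). -/
abbrev Node : Type := ℕ × ℕ × ℕ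

/-- `nodeBelow A B` holds when `B` is strictly below `A`, i.e. `A < B` lexicographically. -/
def nodeBelow (A B : Node) : Prop :=
  A.1 < B.1 ∨ (A.1 = B.1 ∧ (A.2.1 < B.2.1 ∨ (A.2.1 = B.2.1 ∧ A.2.2 < B.2.2)))

/-- An `ℓ`-multipartition of `n`. -/
structure Multipartition (ℓ n : ℕ) : Type where
  part : ℕ → ℕ → ℕ
  comp_bound : ∀ l, ℓ ≤ l → ∀ r, part l r = 0
  antitone : ∀ l, Antitone (part l)
  row_bound : ∀ l r, n ≤ r → part l r = 0
  size : (∑ l ∈ Finset.range ℓ, ∑ r ∈ Finset.range n, part l r) = n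

/-- The diagram of a multipartition. -/
def Multipartition.diagram {ℓ n : ℕ} (μ : Multipartition ℓ n) : Set Node :=
  {A | A.2.2 < μ.part A.1 A.2.1}

/-- A standard tableau: a bijection from the diagram of its shape onto `{1, …, n}`
that increases along rows and down columns of each component (it takes the value
`0` off the diagram, so that it is determined by its entries). -/
structure StdTableau (ℓ n : ℕ) : Type where
  shape : Multipartition ℓ n
  entry : Node → ℕ
  entry_zero : ∀ A, A ∉ shape.diagram → entry A = 0
  bijOn : Set.BijOn entry shape.diagram (Set.Icc 1 n)
  row_inc : ∀ l r c, (l, r, c + 1) ∈ shape.diagram → entry (l, r, c) < entry (l, r, c + 1)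
  col_inc : ∀ l r c, (l, r + 1, c) ∈ shape.diagram → entry (l, r, c) < entry (l, r + 1, c)

/-- The node of a standard tableau containing the entry `k`. -/
noncomputable def StdTableau.node {ℓ n : ℕ} (T : StdTableau ℓ n) (k : ℕ) : Node :=
  Function.invFunOn T.entry T.shape.diagram k

/-- The content `c_k(T) = κ_l + c - r` of the entry `k` in the tableau `T`
(`1 ≤ k ≤ n`). -/
noncomputable def content {ℓ n : ℕ} (κ : ℕ → ℤ) (T : StdTableau ℓ n) (k : ℕ) : ℤ :=
  κ (T.node k).1 + ((T.node k).2.2 : ℤ) - ((T.node k).2.1 : ℤ)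

/-- The residue sequence of a standard tableau, in `I^n` with `I = ℤ/eℤ`. -/
noncomputable def resSeq {ℓ n : ℕ} (e : ℕ) (κ : ℕ → ℤ) (T : StdTableau ℓ n) :
    Fin n → ZMod e :=
  fun k => ((content κ T (k.1 + 1) : ℤ) : ZMod e)

/-- The residue of a node. -/
def resNode (e : ℕ) (κ : ℕ → ℤ) (A : Node) : ZMod e :=
  ((κ A.1 + (A.2.2 : ℤ) - (A.2.1 : ℤ) : ℤ) : ZMod e)

/-- A set of nodes is the diagram of a multipartition (with at most `ℓ` components)
iff it is finite and downward closed in rows and columns. -/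
def IsDiagramSet (ℓ : ℕ) (S : Set Node) : Prop :=
  S.Finite ∧ (∀ A ∈ S, A.1 < ℓ) ∧
    (∀ l r c, (l, r, c + 1) ∈ S → (l, r, c) ∈ S) ∧
    (∀ l r c, (l, r + 1, c) ∈ S → (l, r, c) ∈ S)

/-- `A` is an addable node of the diagram `S`. -/
def Addable (ℓ : ℕ) (S : Set Node) (A : Node) : Prop :=
  A ∉ S ∧ IsDiagramSet ℓ (S ∪ {A})

/-- `A` is a removable node of the diagram `S`. -/
def Removable (ℓ : ℕ) (S : Set Node) (A : Node) : Prop :=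
  A ∈ S ∧ IsDiagramSet ℓ (S \ {A})

/-- `d_A(S)`: the number of addable nodes of `S` of the same residue as `A` strictly
below `A`, minus the number of removable ones. -/
noncomputable def dNode (ℓ e : ℕ) (κ : ℕ → ℤ) (S : Set Node) (A : Node) : ℤ :=
  (Set.ncard {B | Addable ℓ S B ∧ resNode e κ B = resNode e κ A ∧ nodeBelow A B} : ℤ) -
    (Set.ncard {B | Removable ℓ S B ∧ resNode e κ B = resNode e κ A ∧ nodeBelow A B} : ℤ)

/-- The Brundan–Kleshchev–Wang degree `deg_e(T)` of a standard tableau, written as the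
telescoping sum of the recursion `deg_e(T) = deg_e(T↓(n-1)) + d_A(Shape(T))`. -/
noncomputable def degE {ℓ n : ℕ} (e : ℕ) (κ : ℕ → ℤ) (T : StdTableau ℓ n) : ℤ :=
  ∑ m ∈ Finset.Icc 1 n,
    dNode ℓ e κ {A | A ∈ T.shape.diagram ∧ T.entry A ≤ m} (T.node m)

/-- The restriction of the diagram of `T` to entries `≤ m` (the diagram of `Shape(T↓m)`). -/
def restDiag {ℓ n : ℕ} (T : StdTableau ℓ n) (m : ℕ) : Set Node :=
  {A | A ∈ T.shape.diagram ∧ T.entry A ≤ m}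

/-- Dominance order on standard tableaux: `domTab S T` iff `S ⊵ T`. -/
def domTab {ℓ n : ℕ} (S T : StdTableau ℓ n) : Prop :=
  ∀ m l i : ℕ,
    Set.ncard {A | A ∈ restDiag T m ∧ (A.1 < l ∨ (A.1 = l ∧ A.2.1 ≤ i))} ≤
      Set.ncard {A | A ∈ restDiag S m ∧ (A.1 < l ∨ (A.1 = l ∧ A.2.1 ≤ i))}

/-- Interchange the entries `r` and `r + 1` in an entry function. -/
def swapEntry (f : Node → ℕ) (r : ℕ) : Node → ℕ :=
  fun A => if f A = r then r + 1 else if f A = r + 1 then r else f A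

/-- `ρ_r(T) = c_r(T) - c_{r+1}(T)`, the axial distance. -/
noncomputable def rhoTab {ℓ n : ℕ} (κ : ℕ → ℤ) (T : StdTableau ℓ n) (r : ℕ) : ℤ :=
  content κ T r - content κ T (r + 1)

/-- The entry function of the row-reading initial tableau `t^λ`. -/
noncomputable def tlamEntry {ℓ n : ℕ} (μ : Multipartition ℓ n) (A : Node) : ℕ :=
  if A ∈ μ.diagram then
    (∑ l ∈ Finset.range A.1, ∑ r ∈ Finset.range n, μ.part l r) +
      (∑ r ∈ Finset.range A.2.1, μ.part A.1 r) + A.2.2 + 1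
  else 0

/-- The finite set of possible contents of standard tableaux of size `n`. -/
noncomputable def contFinset (ℓ n : ℕ) (κ : ℕ → ℤ) : Finset ℤ :=
  ((Finset.range ℓ ×ˢ Finset.range n ×ˢ Finset.range n).image
      (fun x => κ x.1 + (x.2.2 : ℤ) - (x.2.1 : ℤ))).filter
    (fun c => ∃ T : StdTableau ℓ n, ∃ k, 1 ≤ k ∧ k ≤ n ∧ content κ T k = c)

/-- The standard tableau (if any) obtained from `T` by interchanging the entries
`r` and `r + 1`; i.e. `T·s_r` if it is standard, and `none` otherwise. -/
noncomputable def oSwapO {ℓ n : ℕ} (T : StdTableau ℓ n) (r : ℕ) :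
    Option (StdTableau ℓ n) :=
  if h : ∃ V : StdTableau ℓ n, V.entry = swapEntry T.entry r then some (Classical.choose h)
  else none

/-- `oSwap` extended to `Option`. -/
noncomputable def oSwap {ℓ n : ℕ} (X : Option (StdTableau ℓ n)) (r : ℕ) :
    Option (StdTableau ℓ n) :=
  X.bind fun T => oSwapO T r

/-- Evaluate a seminormal coefficient system on an optional tableau (by `0` if none). -/
noncomputable def aE {ℓ n : ℕ} {K : Type*} [Field K] (α : ℕ → StdTableau ℓ n → K) (r : ℕ)
    (X : Option (StdTableau ℓ n)) : K :=
  X.elim 0 (α r)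

/-! ## Separation and idempotent subrings -/

/-- `(K, t)` separates `Std(P_n)` (field version):
`[n]!_t ∏_{1 ≤ l < m ≤ ℓ} ∏_{-n < d < n} [κ_l - κ_m + d]_t ≠ 0`. -/
def SeparatesF {K : Type*} [Field K] (t : Kˣ) (n ℓ : ℕ) (κ : ℕ → ℤ) : Prop :=
  ((∏ d ∈ Finset.Icc 1 n, qint (t : K) (d : ℤ)) *
      ∏ l ∈ Finset.range ℓ, ∏ m ∈ Finset.Ioo l ℓ,
        ∏ d ∈ Finset.Ioo (-(n : ℤ)) (n : ℤ), qint (t : K) (κ l - κ m + d)) ≠ 0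

/-- `(O, t)` separates `Std(P_n)` (subring version): the separation element is a unit. -/
def SeparatesU {O : Type*} [CommRing O] (t : Oˣ) (n ℓ : ℕ) (κ : ℕ → ℤ) : Prop :=
  IsUnit ((∏ d ∈ Finset.Icc 1 n, qintU t (d : ℤ)) *
      ∏ l ∈ Finset.range ℓ, ∏ m ∈ Finset.Ioo l ℓ,
        ∏ d ∈ Finset.Ioo (-(n : ℤ)) (n : ℤ), qintU t (κ l - κ m + d))

/-- `(O, t)` is an `e`-idempotent subring of the field `K`. -/
def IsIdempotentSubring {K : Type*} [Field K] (O : Subring K) (t : Oˣ) (e n ℓ : ℕ)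
    (κ : ℕ → ℤ) : Prop :=
  SeparatesU t n ℓ κ ∧
    (∀ k : ℤ, ¬(e : ℤ) ∣ k → IsUnit (qintU t k)) ∧
    (∀ k : ℤ, (e : ℤ) ∣ k → qintU t k ∈ Ideal.jacobson (⊥ : Ideal O))

/-! ## The cyclotomic Hecke algebra, by generators and relations -/

/-- Generators `L_1, …, L_n`, `T_1, …, T_{n-1}` (here `0`-based). -/
inductive HeckeGen (n : ℕ) : Type
  | L : Fin n → HeckeGen n
  | T : Fin (n - 1) → HeckeGen n

/-- The position `r` of the pair `(r, r+1)` interchanged by the `r`-th transposition. -/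
def pL {n : ℕ} (r : Fin (n - 1)) : Fin n := ⟨r.1, by have := r.2; omega⟩

/-- The position `r + 1` of the pair interchanged by the `r`-th transposition. -/
def pR {n : ℕ} (r : Fin (n - 1)) : Fin n := ⟨r.1 + 1, by have := r.2; omega⟩

/-- The position `r + 2`, used in braid relations. -/
def pM {n : ℕ} (r : Fin (n - 1)) (hr : r.1 + 1 < n - 1) : Fin n := ⟨r.1 + 2, by omega⟩

/-- The free algebra generator `L_k`. -/
def hL (R : Type*) [CommRing R] {n : ℕ} (k : Fin n) : FreeAlgebra R (HeckeGen n) :=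
  FreeAlgebra.ι R (HeckeGen.L k)

/-- The free algebra generator `T_r`. -/
def hT (R : Type*) [CommRing R] {n : ℕ} (r : Fin (n - 1)) : FreeAlgebra R (HeckeGen n) :=
  FreeAlgebra.ι R (HeckeGen.T r)

/-- The defining relations of the integral cyclotomic Hecke algebra `H_n(R, t, κ)`. -/
inductive HeckeRel (R : Type*) [CommRing R] (t : Rˣ) (n ℓ : ℕ) (κ : ℕ → ℤ) :
    FreeAlgebra R (HeckeGen n) → FreeAlgebra R (HeckeGen n) → Prop
  | cyc (h : 0 < n) :
      HeckeRel R t n ℓ κ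
        (((List.range ℓ).map fun l =>
          hL R (⟨0, h⟩ : Fin n) - algebraMap R _ (qintU t (κ l))).prod) 0
  | quad (r : Fin (n - 1)) :
      HeckeRel R t n ℓ κ ((hT R r + 1) * (hT R r - algebraMap R _ (t : R))) 0
  | LL (k m : Fin n) : HeckeRel R t n ℓ κ (hL R k * hL R m) (hL R m * hL R k)
  | TTfar (r s : Fin (n - 1)) (h : r.1 + 1 < s.1 ∨ s.1 + 1 < r.1) :
      HeckeRel R t n ℓ κ (hT R r * hT R s) (hT R s * hT R r)
  | braid (r s : Fin (n - 1)) (h : s.1 = r.1 + 1) :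
      HeckeRel R t n ℓ κ (hT R r * hT R s * hT R r) (hT R s * hT R r * hT R s)
  | TL (r : Fin (n - 1)) (k : Fin n) (h : k.1 ≠ r.1 ∧ k.1 ≠ r.1 + 1) :
      HeckeRel R t n ℓ κ (hT R r * hL R k) (hL R k * hT R r)
  | LT (r : Fin (n - 1)) :
      HeckeRel R t n ℓ κ (hL R (pR r) * (hT R r - algebraMap R _ (t : R) + 1))
        (hT R r * hL R (pL r) + 1)

/-- The integral cyclotomic Hecke algebra of type `A`, `H_n(R, t, κ)`. -/
noncomputable abbrev CycHecke (R : Type*) [CommRing R] (t : Rˣ) (n ℓ : ℕ) (κ : ℕ → ℤ) :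
    Type _ :=
  RingQuot (HeckeRel R t n ℓ κ)

/-- The generator `L_k` of the cyclotomic Hecke algebra. -/
noncomputable def Lgen (R : Type*) [CommRing R] (t : Rˣ) (n ℓ : ℕ) (κ : ℕ → ℤ)
    (k : Fin n) : CycHecke R t n ℓ κ :=
  RingQuot.mkAlgHom R (HeckeRel R t n ℓ κ) (hL R k)

/-- The generator `T_r` of the cyclotomic Hecke algebra. -/
noncomputable def Tgen (R : Type*) [CommRing R] (t : Rˣ) (n ℓ : ℕ) (κ : ℕ → ℤ)
    (r : Fin (n - 1)) : CycHecke R t n ℓ κ :=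
  RingQuot.mkAlgHom R (HeckeRel R t n ℓ κ) (hT R r)

end Paper
/-! ## Quiver Hecke (KLR) algebras, by generators and relations -/

namespace Paper

/-- Generators `e(i)` (`i ∈ I^n`), `ψ_1, …, ψ_{n-1}`, `y_1, …, y_n` (here `0`-based). -/
inductive KLRGen (n e : ℕ) : Type
  | idem : (Fin n → ZMod e) → KLRGen n e
  | psi : Fin (n - 1) → KLRGen n e
  | y : Fin n → KLRGen n e

/-- The free algebra generator `e(i)`. -/
def kE (R : Type*) [CommRing R] {n e : ℕ} (i : Fin n → ZMod e) :
    FreeAlgebra R (KLRGen n e) :=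
  FreeAlgebra.ι R (KLRGen.idem i)

/-- The free algebra generator `ψ_r`. -/
def kPsi (R : Type*) [CommRing R] {n e : ℕ} (r : Fin (n - 1)) :
    FreeAlgebra R (KLRGen n e) :=
  FreeAlgebra.ι R (KLRGen.psi r)

/-- The free algebra generator `y_k`. -/
def kY (R : Type*) [CommRing R] {n e : ℕ} (k : Fin n) : FreeAlgebra R (KLRGen n e) :=
  FreeAlgebra.ι R (KLRGen.y k)

/-- `s_r · i`: interchange the entries of `i` at positions `r` and `r + 1`. -/
def swapSeq {n e : ℕ} (i : Fin n → ZMod e) (r : Fin (n - 1)) : Fin n → ZMod e :=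
  fun k => if k = pL r then i (pR r) else if k = pR r then i (pL r) else i k

/-- The defining relations of the cyclotomic quiver Hecke algebra `R_n^Λ(R)` where
`Λ = Σ_l Λ_{κ_l mod e}`. -/
inductive KLRRel (R : Type*) [CommRing R] (n e ℓ : ℕ) [NeZero e] (κ : ℕ → ℤ) :
    FreeAlgebra R (KLRGen n e) → FreeAlgebra R (KLRGen n e) → Prop
  | cyc (h : 0 < n) (i : Fin n → ZMod e) :
      KLRRel R n e ℓ κ
        ((kY R (⟨0, h⟩ : Fin n)) ^
            (((Finset.range ℓ).filter fun l => ((κ l : ZMod e) = i ⟨0, h⟩)).card) *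
          kE R i) 0
  | orth (i j : Fin n → ZMod e) (h : i ≠ j) : KLRRel R n e ℓ κ (kE R i * kE R j) 0
  | idem (i : Fin n → ZMod e) : KLRRel R n e ℓ κ (kE R i * kE R i) (kE R i)
  | complete : KLRRel R n e ℓ κ (∑ i : Fin n → ZMod e, kE R i) 1
  | yE (k : Fin n) (i : Fin n → ZMod e) :
      KLRRel R n e ℓ κ (kY R k * kE R i) (kE R i * kY R k)
  | psiE (r : Fin (n - 1)) (i : Fin n → ZMod e) :
      KLRRel R n e ℓ κ (kPsi R r * kE R i) (kE R (swapSeq i r) * kPsi R r)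
  | yy (k m : Fin n) : KLRRel R n e ℓ κ (kY R k * kY R m) (kY R m * kY R k)
  | psiyEq (r : Fin (n - 1)) (i : Fin n → ZMod e) (h : i (pL r) = i (pR r)) :
      KLRRel R n e ℓ κ (kPsi R r * kY R (pR r) * kE R i)
        ((kY R (pL r) * kPsi R r + 1) * kE R i)
  | psiyNe (r : Fin (n - 1)) (i : Fin n → ZMod e) (h : i (pL r) ≠ i (pR r)) :
      KLRRel R n e ℓ κ (kPsi R r * kY R (pR r) * kE R i)
        (kY R (pL r) * kPsi R r * kE R i)
  | ypsiEq (r : Fin (n - 1)) (i : Fin n → ZMod e) (h : i (pL r) = i (pR r)) :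
      KLRRel R n e ℓ κ (kY R (pR r) * kPsi R r * kE R i)
        ((kPsi R r * kY R (pL r) + 1) * kE R i)
  | ypsiNe (r : Fin (n - 1)) (i : Fin n → ZMod e) (h : i (pL r) ≠ i (pR r)) :
      KLRRel R n e ℓ κ (kY R (pR r) * kPsi R r * kE R i)
        (kPsi R r * kY R (pL r) * kE R i)
  | psiyFar (r : Fin (n - 1)) (k : Fin n) (h : k.1 ≠ r.1 ∧ k.1 ≠ r.1 + 1) :
      KLRRel R n e ℓ κ (kPsi R r * kY R k) (kY R k * kPsi R r)
  | psipsiFar (r s : Fin (n - 1)) (h : r.1 + 1 < s.1 ∨ s.1 + 1 < r.1) :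
      KLRRel R n e ℓ κ (kPsi R r * kPsi R s) (kPsi R s * kPsi R r)
  | quadEq (r : Fin (n - 1)) (i : Fin n → ZMod e) (h : i (pL r) = i (pR r)) :
      KLRRel R n e ℓ κ (kPsi R r ^ 2 * kE R i) 0
  | quadR (r : Fin (n - 1)) (i : Fin n → ZMod e)
      (h1 : i (pR r) = i (pL r) + 1) (h2 : i (pL r) ≠ i (pR r) + 1) :
      KLRRel R n e ℓ κ (kPsi R r ^ 2 * kE R i) ((kY R (pL r) - kY R (pR r)) * kE R i)
  | quadL (r : Fin (n - 1)) (i : Fin n → ZMod e)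
      (h1 : i (pL r) = i (pR r) + 1) (h2 : i (pR r) ≠ i (pL r) + 1) :
      KLRRel R n e ℓ κ (kPsi R r ^ 2 * kE R i) ((kY R (pR r) - kY R (pL r)) * kE R i)
  | quadBoth (r : Fin (n - 1)) (i : Fin n → ZMod e)
      (h1 : i (pR r) = i (pL r) + 1) (h2 : i (pL r) = i (pR r) + 1) :
      KLRRel R n e ℓ κ (kPsi R r ^ 2 * kE R i)
        ((kY R (pR r) - kY R (pL r)) * (kY R (pL r) - kY R (pR r)) * kE R i)
  | quadNone (r : Fin (n - 1)) (i : Fin n → ZMod e) (h1 : i (pL r) ≠ i (pR r))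
      (h2 : i (pR r) ≠ i (pL r) + 1) (h3 : i (pL r) ≠ i (pR r) + 1) :
      KLRRel R n e ℓ κ (kPsi R r ^ 2 * kE R i) (kE R i)
  | braidR (r : Fin (n - 1)) (hr : r.1 + 1 < n - 1) (i : Fin n → ZMod e)
      (h0 : i (pM r hr) = i (pL r)) (h1 : i (pR r) = i (pL r) + 1)
      (h2 : i (pL r) ≠ i (pR r) + 1) :
      KLRRel R n e ℓ κ (kPsi R r * kPsi R ⟨r.1 + 1, hr⟩ * kPsi R r * kE R i)
        ((kPsi R ⟨r.1 + 1, hr⟩ * kPsi R r * kPsi R ⟨r.1 + 1, hr⟩ - 1) * kE R i)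
  | braidL (r : Fin (n - 1)) (hr : r.1 + 1 < n - 1) (i : Fin n → ZMod e)
      (h0 : i (pM r hr) = i (pL r)) (h1 : i (pL r) = i (pR r) + 1)
      (h2 : i (pR r) ≠ i (pL r) + 1) :
      KLRRel R n e ℓ κ (kPsi R r * kPsi R ⟨r.1 + 1, hr⟩ * kPsi R r * kE R i)
        ((kPsi R ⟨r.1 + 1, hr⟩ * kPsi R r * kPsi R ⟨r.1 + 1, hr⟩ + 1) * kE R i)
  | braidBoth (r : Fin (n - 1)) (hr : r.1 + 1 < n - 1) (i : Fin n → ZMod e)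
      (h0 : i (pM r hr) = i (pL r)) (h1 : i (pR r) = i (pL r) + 1)
      (h2 : i (pL r) = i (pR r) + 1) :
      KLRRel R n e ℓ κ (kPsi R r * kPsi R ⟨r.1 + 1, hr⟩ * kPsi R r * kE R i)
        ((kPsi R ⟨r.1 + 1, hr⟩ * kPsi R r * kPsi R ⟨r.1 + 1, hr⟩ +
            kY R (pL r) - 2 * kY R (pR r) + kY R (pM r hr)) * kE R i)
  | braidNone (r : Fin (n - 1)) (hr : r.1 + 1 < n - 1) (i : Fin n → ZMod e)
      (h : ¬(i (pM r hr) = i (pL r) ∧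
        (i (pR r) = i (pL r) + 1 ∨ i (pL r) = i (pR r) + 1))) :
      KLRRel R n e ℓ κ (kPsi R r * kPsi R ⟨r.1 + 1, hr⟩ * kPsi R r * kE R i)
        (kPsi R ⟨r.1 + 1, hr⟩ * kPsi R r * kPsi R ⟨r.1 + 1, hr⟩ * kE R i)

/-- The cyclotomic quiver Hecke algebra `R_n^Λ(R)`, `Λ = Σ_l Λ_{κ_l mod e}`. -/
noncomputable abbrev KLR (R : Type*) [CommRing R] (n e ℓ : ℕ) [NeZero e] (κ : ℕ → ℤ) :
    Type _ :=
  RingQuot (KLRRel R n e ℓ κ)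

/-- The generator `e(i)` of the cyclotomic quiver Hecke algebra. -/
noncomputable def KeGen (R : Type*) [CommRing R] (n e ℓ : ℕ) [NeZero e] (κ : ℕ → ℤ)
    (i : Fin n → ZMod e) : KLR R n e ℓ κ :=
  RingQuot.mkAlgHom R (KLRRel R n e ℓ κ) (kE R i)

/-- The generator `ψ_r` of the cyclotomic quiver Hecke algebra. -/
noncomputable def KpsiGen (R : Type*) [CommRing R] (n e ℓ : ℕ) [NeZero e] (κ : ℕ → ℤ)
    (r : Fin (n - 1)) : KLR R n e ℓ κ :=
  RingQuot.mkAlgHom R (KLRRel R n e ℓ κ) (kPsi R r)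

/-- The generator `y_k` of the cyclotomic quiver Hecke algebra. -/
noncomputable def KyGen (R : Type*) [CommRing R] (n e ℓ : ℕ) [NeZero e] (κ : ℕ → ℤ)
    (k : Fin n) : KLR R n e ℓ κ :=
  RingQuot.mkAlgHom R (KLRRel R n e ℓ κ) (kY R k)

end Paper
/-! ## The deformed cyclotomic quiver Hecke algebra -/

namespace Paper

/-- `y_k^⟨d⟩ = t^d y_k + [d]_t` in the free algebra. -/
def ydot (R : Type*) [CommRing R] (t : Rˣ) {n e : ℕ} (d : ℤ) (k : Fin n) :
    FreeAlgebra R (KLRGen n e) :=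
  algebraMap R _ ((t ^ d : Rˣ) : R) * kY R k + algebraMap R _ (qintU t d)

/-- `ρ_r(i) = î_r - î_{r+1}` for `i ∈ I^n`. -/
def rhoI {n e : ℕ} (i : Fin n → ZMod e) (r : Fin (n - 1)) : ℤ :=
  ((i (pL r)).val : ℤ) - ((i (pR r)).val : ℤ)

/-- The defining relations of the deformed cyclotomic quiver Hecke algebra `R_n(O)`. -/
inductive DefKLRRel (R : Type*) [CommRing R] (t : Rˣ) (n e ℓ : ℕ) [NeZero e] (κ : ℕ → ℤ) :
    FreeAlgebra R (KLRGen n e) → FreeAlgebra R (KLRGen n e) → Prop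
  | cyc (h : 0 < n) (i : Fin n → ZMod e) :
      DefKLRRel R t n e ℓ κ
        ((((List.range ℓ).map fun l =>
            if ((κ l : ZMod e) = i ⟨0, h⟩) then
              kY R (⟨0, h⟩ : Fin n) -
                algebraMap R _ (qintU t (κ l - ((i ⟨0, h⟩).val : ℤ)))
            else 1).prod) * kE R i) 0
  | orth (i j : Fin n → ZMod e) (h : i ≠ j) : DefKLRRel R t n e ℓ κ (kE R i * kE R j) 0
  | idem (i : Fin n → ZMod e) : DefKLRRel R t n e ℓ κ (kE R i * kE R i) (kE R i)
  | complete : DefKLRRel R t n e ℓ κ (∑ i : Fin n → ZMod e, kE R i) 1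
  | yE (k : Fin n) (i : Fin n → ZMod e) :
      DefKLRRel R t n e ℓ κ (kY R k * kE R i) (kE R i * kY R k)
  | psiE (r : Fin (n - 1)) (i : Fin n → ZMod e) :
      DefKLRRel R t n e ℓ κ (kPsi R r * kE R i) (kE R (swapSeq i r) * kPsi R r)
  | yy (k m : Fin n) : DefKLRRel R t n e ℓ κ (kY R k * kY R m) (kY R m * kY R k)
  | psiyEq (r : Fin (n - 1)) (i : Fin n → ZMod e) (h : i (pL r) = i (pR r)) :
      DefKLRRel R t n e ℓ κ (kPsi R r * kY R (pR r) * kE R i)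
        ((kY R (pL r) * kPsi R r + 1) * kE R i)
  | psiyNe (r : Fin (n - 1)) (i : Fin n → ZMod e) (h : i (pL r) ≠ i (pR r)) :
      DefKLRRel R t n e ℓ κ (kPsi R r * kY R (pR r) * kE R i)
        (kY R (pL r) * kPsi R r * kE R i)
  | ypsiEq (r : Fin (n - 1)) (i : Fin n → ZMod e) (h : i (pL r) = i (pR r)) :
      DefKLRRel R t n e ℓ κ (kY R (pR r) * kPsi R r * kE R i)
        ((kPsi R r * kY R (pL r) + 1) * kE R i)
  | ypsiNe (r : Fin (n - 1)) (i : Fin n → ZMod e) (h : i (pL r) ≠ i (pR r)) :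
      DefKLRRel R t n e ℓ κ (kY R (pR r) * kPsi R r * kE R i)
        (kPsi R r * kY R (pL r) * kE R i)
  | psiyFar (r : Fin (n - 1)) (k : Fin n) (h : k.1 ≠ r.1 ∧ k.1 ≠ r.1 + 1) :
      DefKLRRel R t n e ℓ κ (kPsi R r * kY R k) (kY R k * kPsi R r)
  | psipsiFar (r s : Fin (n - 1)) (h : r.1 + 1 < s.1 ∨ s.1 + 1 < r.1) :
      DefKLRRel R t n e ℓ κ (kPsi R r * kPsi R s) (kPsi R s * kPsi R r)
  | quadEq (r : Fin (n - 1)) (i : Fin n → ZMod e) (h : i (pL r) = i (pR r)) :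
      DefKLRRel R t n e ℓ κ (kPsi R r ^ 2 * kE R i) 0
  | quadR (r : Fin (n - 1)) (i : Fin n → ZMod e)
      (h1 : i (pR r) = i (pL r) + 1) (h2 : i (pL r) ≠ i (pR r) + 1) :
      DefKLRRel R t n e ℓ κ (kPsi R r ^ 2 * kE R i)
        ((ydot R t (1 + rhoI i r) (pL r) - kY R (pR r)) * kE R i)
  | quadL (r : Fin (n - 1)) (i : Fin n → ZMod e)
      (h1 : i (pL r) = i (pR r) + 1) (h2 : i (pR r) ≠ i (pL r) + 1) :
      DefKLRRel R t n e ℓ κ (kPsi R r ^ 2 * kE R i)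
        ((ydot R t (1 - rhoI i r) (pR r) - kY R (pL r)) * kE R i)
  | quadBoth (r : Fin (n - 1)) (i : Fin n → ZMod e)
      (h1 : i (pR r) = i (pL r) + 1) (h2 : i (pL r) = i (pR r) + 1) :
      DefKLRRel R t n e ℓ κ (kPsi R r ^ 2 * kE R i)
        ((ydot R t (1 + rhoI i r) (pL r) - kY R (pR r)) *
          (ydot R t (1 - rhoI i r) (pR r) - kY R (pL r)) * kE R i)
  | quadNone (r : Fin (n - 1)) (i : Fin n → ZMod e) (h1 : i (pL r) ≠ i (pR r))
      (h2 : i (pR r) ≠ i (pL r) + 1) (h3 : i (pL r) ≠ i (pR r) + 1) :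
      DefKLRRel R t n e ℓ κ (kPsi R r ^ 2 * kE R i) (kE R i)
  | braidBoth (r : Fin (n - 1)) (hr : r.1 + 1 < n - 1) (i : Fin n → ZMod e)
      (h0 : i (pM r hr) = i (pL r)) (h1 : i (pR r) = i (pL r) + 1)
      (h2 : i (pL r) = i (pR r) + 1) :
      DefKLRRel R t n e ℓ κ
        ((kPsi R r * kPsi R ⟨r.1 + 1, hr⟩ * kPsi R r -
            kPsi R ⟨r.1 + 1, hr⟩ * kPsi R r * kPsi R ⟨r.1 + 1, hr⟩) * kE R i)
        ((ydot R t (1 + rhoI i r) (pL r) + ydot R t (1 + rhoI i r) (pM r hr) -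
            ydot R t (1 + rhoI i r) (pR r) - ydot R t (1 - rhoI i r) (pR r)) * kE R i)
  | braidR (r : Fin (n - 1)) (hr : r.1 + 1 < n - 1) (i : Fin n → ZMod e)
      (h0 : i (pM r hr) = i (pL r)) (h1 : i (pR r) = i (pL r) + 1)
      (h2 : i (pL r) ≠ i (pR r) + 1) :
      DefKLRRel R t n e ℓ κ
        ((kPsi R r * kPsi R ⟨r.1 + 1, hr⟩ * kPsi R r -
            kPsi R ⟨r.1 + 1, hr⟩ * kPsi R r * kPsi R ⟨r.1 + 1, hr⟩) * kE R i)
        (algebraMap R _ (-(((t ^ (1 + rhoI i r) : Rˣ) : R))) * kE R i)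
  | braidL (r : Fin (n - 1)) (hr : r.1 + 1 < n - 1) (i : Fin n → ZMod e)
      (h0 : i (pM r hr) = i (pL r)) (h1 : i (pL r) = i (pR r) + 1)
      (h2 : i (pR r) ≠ i (pL r) + 1) :
      DefKLRRel R t n e ℓ κ
        ((kPsi R r * kPsi R ⟨r.1 + 1, hr⟩ * kPsi R r -
            kPsi R ⟨r.1 + 1, hr⟩ * kPsi R r * kPsi R ⟨r.1 + 1, hr⟩) * kE R i)
        (kE R i)
  | braidNone (r : Fin (n - 1)) (hr : r.1 + 1 < n - 1) (i : Fin n → ZMod e)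
      (h : ¬(i (pM r hr) = i (pL r) ∧
        (i (pR r) = i (pL r) + 1 ∨ i (pL r) = i (pR r) + 1))) :
      DefKLRRel R t n e ℓ κ
        ((kPsi R r * kPsi R ⟨r.1 + 1, hr⟩ * kPsi R r -
            kPsi R ⟨r.1 + 1, hr⟩ * kPsi R r * kPsi R ⟨r.1 + 1, hr⟩) * kE R i) 0

/-- The deformed cyclotomic quiver Hecke algebra `R_n(R)`. -/
noncomputable abbrev DefKLR (R : Type*) [CommRing R] (t : Rˣ) (n e ℓ : ℕ) [NeZero e]
    (κ : ℕ → ℤ) : Type _ :=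
  RingQuot (DefKLRRel R t n e ℓ κ)

/-- The generator `f_i` of the deformed cyclotomic quiver Hecke algebra. -/
noncomputable def DfGen (R : Type*) [CommRing R] (t : Rˣ) (n e ℓ : ℕ) [NeZero e]
    (κ : ℕ → ℤ) (i : Fin n → ZMod e) : DefKLR R t n e ℓ κ :=
  RingQuot.mkAlgHom R (DefKLRRel R t n e ℓ κ) (kE R i)

/-- The generator `ψ_r` of the deformed cyclotomic quiver Hecke algebra. -/
noncomputable def DpsiGen (R : Type*) [CommRing R] (t : Rˣ) (n e ℓ : ℕ) [NeZero e]
    (κ : ℕ → ℤ) (r : Fin (n - 1)) : DefKLR R t n e ℓ κ :=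
  RingQuot.mkAlgHom R (DefKLRRel R t n e ℓ κ) (kPsi R r)

/-- The generator `y_k` of the deformed cyclotomic quiver Hecke algebra. -/
noncomputable def DyGen (R : Type*) [CommRing R] (t : Rˣ) (n e ℓ : ℕ) [NeZero e]
    (κ : ℕ → ℤ) (k : Fin n) : DefKLR R t n e ℓ κ :=
  RingQuot.mkAlgHom R (DefKLRRel R t n e ℓ κ) (kY R k)

/-! ## Seminormal idempotents -/

/-- The seminormal idempotent `F_T` of the semisimple cyclotomic Hecke algebra:
`F_T = ∏_{k=1}^n ∏_{c ∈ Cont(n), [c_k(T)] ≠ [c]} (L_k - [c]) / ([c_k(T)] - [c])`. -/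
noncomputable def Fidem (K : Type*) [Field K] (tK : Kˣ) (n ℓ : ℕ) (κ : ℕ → ℤ)
    (T : StdTableau ℓ n) : CycHecke K tK n ℓ κ :=
  ((List.finRange n).map (fun k =>
    (((contFinset ℓ n κ).sort (· ≤ ·)).map (fun c =>
      if qint (tK : K) (content κ T (k.1 + 1)) ≠ qint (tK : K) c then
        (Lgen K tK n ℓ κ k - algebraMap K _ (qint (tK : K) c)) *
          algebraMap K _ ((qint (tK : K) (content κ T (k.1 + 1)) - qint (tK : K) c)⁻¹)
      else 1)).prod)).prod

/-- The residue idempotent `f_i = Σ_{T ∈ Std(i)} F_T`. -/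
noncomputable def fres (K : Type*) [Field K] (tK : Kˣ) (n ℓ e : ℕ) (κ : ℕ → ℤ)
    (i : Fin n → ZMod e) : CycHecke K tK n ℓ κ :=
  ∑ᶠ T : {T : StdTableau ℓ n // resSeq e κ T = i}, Fidem K tK n ℓ κ T.1

/-- The simultaneous two-sided eigenspace `H_{S,T}` of the Jucys–Murphy elements. -/
noncomputable def eigSub (K : Type*) [Field K] (tK : Kˣ) (n ℓ : ℕ) (κ : ℕ → ℤ)
    (S T : StdTableau ℓ n) : Submodule K (CycHecke K tK n ℓ κ) where
  carrier := {h | ∀ k : Fin n,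
      Lgen K tK n ℓ κ k * h = qint (tK : K) (content κ S (k.1 + 1)) • h ∧
      h * Lgen K tK n ℓ κ k = qint (tK : K) (content κ T (k.1 + 1)) • h}
  add_mem' := by
    intro a b ha hb
    intro k
    obtain ⟨h1, h2⟩ := ha k
    obtain ⟨h3, h4⟩ := hb k
    exact ⟨by rw [mul_add, h1, h3, smul_add], by rw [add_mul, h2, h4, smul_add]⟩
  zero_mem' := by intro k; simp
  smul_mem' := by
    intro c a ha
    intro k
    obtain ⟨h1, h2⟩ := ha k
    constructor
    · rw [mul_smul_comm, h1, smul_comm]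
    · rw [smul_mul_assoc, h2, smul_comm]

end Paper

/-!
The degree depends on the charge only modulo `e`, so the components of the charge may be assumed to
be far apart. Over the field of rational functions, the Hecke algebra then acts on the functions on
the standard tableaux of shape `μ` by Young's seminormal form: the Jucys–Murphy elements act
diagonally, and the generators are self-adjoint for a form which is orthogonal with explicit weights
`γ_T`, the squared norms. Let `v` be the valuation at a primitive `e`-th root of unity.

The integral form generated by the Jucys–Murphy elements and the generators acts with bounded
denominators. It contains an operator that projects onto the line of the initial tableau, up to a
scalar `p`. If `a` belongs to the integral form, then so do all powers of this operator times `a`,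
and its eigenvalue on that line is therefore integral. Hence `p ⟪a δ, b δ⟫` is integral, where `δ`
spans the line and `a`, `b` belong to the integral form.

The integral form moves `δ` to a basis which is unitriangular with respect to the number of
inversions, and a polynomial in the Jucys–Murphy elements cuts this basis down to the tableaux of
residue sequence `i`, because incongruent contents differ by units. The Gram determinant of the
vectors obtained is a unit times the product of the `p γ_T`, and it is integral. Since `p γ_T` has
order `deg_e(T)` at the root of unity, the sum of these degrees is nonnegative.
-/

namespace Paper

/-! ### Hecke families and bounded denominators -/

section HeckeFamily

variable {A : Type*} [Ring A]

/-- `t` slides through the subring `B` if `tB ⊆ Bt + B` and `Bt ⊆ tB + B`. This is how a generator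
`T_j` of an affine Hecke algebra interacts with the polynomial subalgebra, and also with the
subalgebras generated by the polynomials and the `T_k` with `k < j - 1`. -/
structure SlidesThrough (t : A) (B : Subring A) : Prop where
  left : ∀ b ∈ B, ∃ c ∈ B, ∃ d ∈ B, t * b = c * t + d
  right : ∀ b ∈ B, ∃ c ∈ B, ∃ d ∈ B, b * t = t * c + d

theorem SlidesThrough.closure {t : A} {s : Set A}
    (hl : ∀ b ∈ s, ∃ c ∈ Subring.closure s, ∃ d ∈ Subring.closure s, t * b = c * t + d)
    (hr : ∀ b ∈ s, ∃ c ∈ Subring.closure s, ∃ d ∈ Subring.closure s, b * t = t * c + d) :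
    SlidesThrough t (Subring.closure s) where
  left b hb := by
    induction hb using Subring.closure_induction with
    | mem x hx => exact hl x hx
    | zero => exact ⟨0, zero_mem _, 0, zero_mem _, by simp⟩
    | one => exact ⟨1, one_mem _, 0, zero_mem _, by simp⟩
    | add x y _ _ ihx ihy =>
      obtain ⟨a, ha, b, hb, hx⟩ := ihx
      obtain ⟨c, hc, d, hd, hy⟩ := ihy
      exact ⟨a + c, add_mem ha hc, b + d, add_mem hb hd, by rw [mul_add, hx, hy]; noncomm_ring⟩
    | neg x _ ihx =>
      obtain ⟨a, ha, b, hb, hx⟩ := ihx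
      exact ⟨-a, neg_mem ha, -b, neg_mem hb, by rw [mul_neg, hx]; noncomm_ring⟩
    | mul x y _ hy ihx ihy =>
      obtain ⟨a, ha, b, hb, hx⟩ := ihx
      obtain ⟨c, hc, d, hd, hy'⟩ := ihy
      refine ⟨a * c, mul_mem ha hc, a * d + b * y, add_mem (mul_mem ha hd) (mul_mem hb hy), ?_⟩
      rw [← mul_assoc, hx, add_mul, mul_assoc a, hy']
      noncomm_ring
  right b hb := by
    induction hb using Subring.closure_induction with
    | mem x hx => exact hr x hx
    | zero => exact ⟨0, zero_mem _, 0, zero_mem _, by simp⟩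
    | one => exact ⟨1, one_mem _, 0, zero_mem _, by simp⟩
    | add x y _ _ ihx ihy =>
      obtain ⟨a, ha, b, hb, hx⟩ := ihx
      obtain ⟨c, hc, d, hd, hy⟩ := ihy
      exact ⟨a + c, add_mem ha hc, b + d, add_mem hb hd, by rw [add_mul, hx, hy]; noncomm_ring⟩
    | neg x _ ihx =>
      obtain ⟨a, ha, b, hb, hx⟩ := ihx
      exact ⟨-a, neg_mem ha, -b, neg_mem hb, by rw [neg_mul, hx]; noncomm_ring⟩
    | mul x y hx _ ihx ihy =>
      obtain ⟨a, ha, b, hb, hx'⟩ := ihx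
      obtain ⟨c, hc, d, hd, hy⟩ := ihy
      refine ⟨a * c, mul_mem ha hc, b * c + x * d, add_mem (mul_mem hb hc) (mul_mem hx hd), ?_⟩
      rw [mul_assoc, hy, mul_add, ← mul_assoc, hx']
      noncomm_ring

/-- The additive group `B + BtB`. -/
def bimoduleSpan (B : Subring A) (t : A) : AddSubgroup A :=
  AddSubgroup.closure ((B : Set A) ∪ Set.image2 (fun a b => a * t * b) B B)

section BimoduleSpan

variable {B : Subring A} {t z c : A}

theorem mem_bimoduleSpan_of_mem (hc : c ∈ B) : c ∈ bimoduleSpan B t :=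
  AddSubgroup.subset_closure (Or.inl hc)

theorem mul_mul_mem_bimoduleSpan {a b : A} (ha : a ∈ B) (hb : b ∈ B) :
    a * t * b ∈ bimoduleSpan B t :=
  AddSubgroup.subset_closure (Or.inr ⟨a, ha, b, hb, rfl⟩)

theorem mul_mem_bimoduleSpan {a : A} (ha : a ∈ B) : a * t ∈ bimoduleSpan B t := by
  simpa using mul_mul_mem_bimoduleSpan (t := t) ha (one_mem B)

theorem bimoduleSpan_le {D : AddSubgroup A} (h₁ : ∀ a ∈ B, a ∈ D)
    (h₂ : ∀ a ∈ B, ∀ b ∈ B, a * t * b ∈ D) : bimoduleSpan B t ≤ D := by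
  rw [bimoduleSpan, AddSubgroup.closure_le, Set.union_subset_iff, Set.image2_subset_iff]
  exact ⟨h₁, h₂⟩

theorem bimoduleSpan_mul_right (hz : z ∈ bimoduleSpan B t) (hc : c ∈ B) :
    z * c ∈ bimoduleSpan B t := by
  refine bimoduleSpan_le (D := (bimoduleSpan B t).comap (AddMonoidHom.mulRight c))
    (fun a ha => mem_bimoduleSpan_of_mem (mul_mem ha hc)) (fun a ha b hb => ?_) hz
  simpa [mul_assoc] using mul_mul_mem_bimoduleSpan (t := t) ha (mul_mem hb hc)

theorem bimoduleSpan_mul_left (hz : z ∈ bimoduleSpan B t) (hc : c ∈ B) :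
    c * z ∈ bimoduleSpan B t := by
  refine bimoduleSpan_le (D := (bimoduleSpan B t).comap (AddMonoidHom.mulLeft c))
    (fun a ha => mem_bimoduleSpan_of_mem (mul_mem hc ha)) (fun a ha b hb => ?_) hz
  simpa [mul_assoc] using mul_mul_mem_bimoduleSpan (t := t) (mul_mem hc ha) hb

theorem bimoduleSpan_mul_self (ht : ∀ b ∈ B, t * b * t ∈ bimoduleSpan B t)
    (hz : z ∈ bimoduleSpan B t) : z * t ∈ bimoduleSpan B t := by
  refine bimoduleSpan_le (D := (bimoduleSpan B t).comap (AddMonoidHom.mulRight t))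
    (fun a ha => mul_mem_bimoduleSpan ha) (fun a ha b hb => ?_) hz
  simpa [mul_assoc] using bimoduleSpan_mul_left (ht b hb) ha

theorem closure_insert_le_bimoduleSpan (ht : ∀ b ∈ B, t * b * t ∈ bimoduleSpan B t) :
    (Subring.closure (insert t (B : Set A))).toAddSubgroup ≤ bimoduleSpan B t := by
  intro a ha
  suffices ∀ z ∈ bimoduleSpan B t, z * a ∈ bimoduleSpan B t by
    simpa using this 1 (mem_bimoduleSpan_of_mem (one_mem B))
  induction ha using Subring.closure_induction with
  | mem x hx =>
    rcases hx with rfl | hx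
    · exact fun z => bimoduleSpan_mul_self ht
    · exact fun z hz => bimoduleSpan_mul_right hz hx
  | zero => simp
  | one => simp
  | add x y _ _ ihx ihy => exact fun z hz => by rw [mul_add]; exact add_mem (ihx z hz) (ihy z hz)
  | neg x _ ihx => exact fun z hz => by rw [mul_neg]; exact neg_mem (ihx z hz)
  | mul x y _ _ ihx ihy => exact fun z hz => by rw [← mul_assoc]; exact ihy _ (ihx z hz)

theorem mul_mul_self_mem_bimoduleSpan (htt : t * t ∈ bimoduleSpan B t) {x a b : A} (ha : a ∈ B)
    (hb : b ∈ B) (hx : t * x = a * t + b) : t * x * t ∈ bimoduleSpan B t := by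
  rw [hx, add_mul, mul_assoc]
  exact add_mem (bimoduleSpan_mul_left htt ha) (mul_mem_bimoduleSpan hb)

end BimoduleSpan

/-- The relations of an affine Hecke algebra with polynomial part `W` and generators `T j`,
`j < N`, in the weak form needed to order monomials. -/
structure IsHeckeFamily (W : Subring A) (T : ℕ → A) (N : ℕ) : Prop where
  slides : ∀ j < N, SlidesThrough (T j) W
  quadratic : ∀ j < N, ∃ a ∈ W, ∃ b ∈ W, T j * T j = a * T j + b
  commute : ∀ j k, j + 1 < k → k < N → T k * T j = T j * T k
  braid : ∀ j, j + 1 < N → T j * T (j + 1) * T j = T (j + 1) * T j * T (j + 1)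

/-- The subring generated by `W` and the first `m` generators `T j`. -/
def heckeTower (W : Subring A) (T : ℕ → A) (m : ℕ) : Subring A :=
  Subring.closure ((W : Set A) ∪ T '' Set.Iio m)

section HeckeTower

variable {W : Subring A} {T : ℕ → A} {N m : ℕ}

theorem le_heckeTower : W ≤ heckeTower W T m := fun _ h => Subring.subset_closure (Or.inl h)

theorem mem_heckeTower {j : ℕ} (h : j < m) : T j ∈ heckeTower W T m :=
  Subring.subset_closure (Or.inr ⟨j, h, rfl⟩)

theorem heckeTower_le_succ : heckeTower W T m ≤ heckeTower W T (m + 1) :=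
  Subring.closure_mono (Set.union_subset_union_right _
    (Set.image_mono (Set.Iio_subset_Iio m.le_succ)))

theorem heckeTower_zero : heckeTower W T 0 = W := by
  simp [heckeTower]

theorem heckeTower_succ :
    heckeTower W T (m + 1) = Subring.closure (insert (T m) (heckeTower W T m : Set A)) := by
  refine le_antisymm ?_ ?_
  · rw [heckeTower, Subring.closure_le, Set.union_subset_iff, Set.image_subset_iff]
    refine ⟨fun a ha => Subring.subset_closure (Or.inr (le_heckeTower ha)), fun j hj => ?_⟩
    rcases (Nat.lt_succ_iff_lt_or_eq.mp hj) with hj | rfl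
    · exact Subring.subset_closure (Or.inr (mem_heckeTower hj))
    · exact Subring.subset_closure (Or.inl rfl)
  · rw [Subring.closure_le, Set.insert_subset_iff]
    exact ⟨mem_heckeTower m.lt_succ_self, heckeTower_le_succ⟩

namespace IsHeckeFamily

variable (hT : IsHeckeFamily W T N)
include hT

theorem slidesThrough_heckeTower (hm : m + 1 < N) :
    SlidesThrough (T (m + 1)) (heckeTower W T m) := by
  refine .closure ?_ ?_
  · rintro b (hb | ⟨j, hj, rfl⟩)
    · obtain ⟨c, hc, d, hd, h⟩ := (hT.slides (m + 1) hm).left b hb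
      exact ⟨c, le_heckeTower hc, d, le_heckeTower hd, h⟩
    · exact ⟨T j, mem_heckeTower hj, 0, zero_mem _,
        by rw [hT.commute j (m + 1) (Nat.succ_lt_succ hj) hm, add_zero]⟩
  · rintro b (hb | ⟨j, hj, rfl⟩)
    · obtain ⟨c, hc, d, hd, h⟩ := (hT.slides (m + 1) hm).right b hb
      exact ⟨c, le_heckeTower hc, d, le_heckeTower hd, h⟩
    · exact ⟨T j, mem_heckeTower hj, 0, zero_mem _,
        by rw [hT.commute j (m + 1) (Nat.succ_lt_succ hj) hm, add_zero]⟩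

theorem mul_self_mem_bimoduleSpan (hm : m < N) :
    T m * T m ∈ bimoduleSpan (heckeTower W T m) (T m) := by
  obtain ⟨a, ha, b, hb, h⟩ := hT.quadratic m hm
  rw [h]
  exact add_mem (mul_mem_bimoduleSpan (le_heckeTower ha))
    (mem_bimoduleSpan_of_mem (le_heckeTower hb))

theorem mul_mul_succ_mem_bimoduleSpan (hm : m + 1 < N) {a b : A} (ha : a ∈ heckeTower W T m)
    (hb : b ∈ heckeTower W T m) : T (m + 1) * (a * T m * b) * T (m + 1) ∈
      bimoduleSpan (heckeTower W T (m + 1)) (T (m + 1)) := by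
  have hle := heckeTower_le_succ (W := W) (T := T) (m := m)
  have hTm : T m ∈ heckeTower W T (m + 1) := mem_heckeTower m.lt_succ_self
  obtain ⟨a', ha', a'', ha'', hl⟩ := (hT.slidesThrough_heckeTower hm).left a ha
  obtain ⟨b', hb', b'', hb'', hr⟩ := (hT.slidesThrough_heckeTower hm).right b hb
  have expand : T (m + 1) * (a * T m * b) * T (m + 1) =
      (a' * T m) * T (m + 1) * (T m * b') + a' * T (m + 1) * (T m * b'') +
        (a'' * T m) * T (m + 1) * b' + a'' * T m * b'' := by
    calc T (m + 1) * (a * T m * b) * T (m + 1)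
        = (T (m + 1) * a) * T m * (b * T (m + 1)) := by noncomm_ring
      _ = a' * (T (m + 1) * T m * T (m + 1)) * b' + a' * T (m + 1) * (T m * b'') +
            (a'' * T m) * T (m + 1) * b' + a'' * T m * b'' := by rw [hl, hr]; noncomm_ring
      _ = _ := by rw [← hT.braid m hm]; noncomm_ring
  rw [expand]
  refine add_mem (add_mem (add_mem ?_ ?_) ?_) (mem_bimoduleSpan_of_mem ?_)
  · exact mul_mul_mem_bimoduleSpan (mul_mem (hle ha') hTm) (mul_mem hTm (hle hb'))
  · exact mul_mul_mem_bimoduleSpan (hle ha') (mul_mem hTm (hle hb''))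
  · exact mul_mul_mem_bimoduleSpan (mul_mem (hle ha'') hTm) (hle hb')
  · exact mul_mem (mul_mem (hle ha'') hTm) (hle hb'')

theorem heckeTower_succ_le (hm : m < N) :
    (heckeTower W T (m + 1)).toAddSubgroup ≤ bimoduleSpan (heckeTower W T m) (T m) := by
  rw [heckeTower_succ]
  induction m with
  | zero =>
    refine closure_insert_le_bimoduleSpan fun b hb => ?_
    rw [heckeTower_zero] at hb
    obtain ⟨c, hc, d, hd, h⟩ := (hT.slides 0 hm).left b hb
    exact mul_mul_self_mem_bimoduleSpan (hT.mul_self_mem_bimoduleSpan hm)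
      (le_heckeTower hc) (le_heckeTower hd) h
  | succ m ih =>
    rw [← heckeTower_succ] at ih
    refine closure_insert_le_bimoduleSpan fun b hb => ?_
    refine bimoduleSpan_le (D := (bimoduleSpan (heckeTower W T (m + 1)) (T (m + 1))).comap
      ((AddMonoidHom.mulRight (T (m + 1))).comp (AddMonoidHom.mulLeft (T (m + 1)))))
      (fun a ha => ?_) (fun a ha b hb => hT.mul_mul_succ_mem_bimoduleSpan hm ha hb)
      (ih (m.lt_succ_self.trans hm) hb)
    obtain ⟨c, hc, d, hd, h⟩ := (hT.slidesThrough_heckeTower hm).left a ha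
    exact mul_mul_self_mem_bimoduleSpan (hT.mul_self_mem_bimoduleSpan hm)
      (heckeTower_le_succ hc) (heckeTower_le_succ hd) h

end IsHeckeFamily

end HeckeTower

end HeckeFamily

section CommonDenominator

variable {O K V : Type*} [CommRing O] [IsDomain O] [Field K] [Algebra O K] [AddCommGroup V]
  [Module K V] [Module O V] [IsScalarTower O K V]

/-- A single nonzero denominator `d` makes every operator in `S` map the lattice `L` into
itself. -/
def HasCommonDenominator (L : Submodule O V) (S : Set (Module.End K V)) : Prop :=
  ∃ d : O, d ≠ 0 ∧ ∀ a ∈ S, ∀ x ∈ L, d • a x ∈ L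

theorem HasCommonDenominator.bimoduleSpan {L : Submodule O V} {B : Subring (Module.End K V)}
    {t : Module.End K V} (hB : HasCommonDenominator L (B : Set (Module.End K V)))
    (ht : HasCommonDenominator L {t}) :
    HasCommonDenominator L (bimoduleSpan B t : Set (Module.End K V)) := by
  obtain ⟨d, hd, hB⟩ := hB
  obtain ⟨d', hd', ht⟩ := ht
  refine ⟨d * d' * d, by simp [hd, hd'], fun a ha => ?_⟩
  induction ha using AddSubgroup.closure_induction with
  | mem z hz =>
    intro x hx
    rcases hz with hz | ⟨a, ha, b, hb, rfl⟩
    · rw [mul_comm, mul_smul, smul_comm]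
      exact L.smul_mem _ (hB z hz x hx)
    · have := hB a ha _ (ht t rfl _ (hB b hb x hx))
      simpa only [LinearMap.map_smul_of_tower, smul_smul, Module.End.mul_apply, mul_assoc]
        using this
  | zero => simp
  | add y z _ _ ihy ihz =>
    intro x hx
    rw [LinearMap.add_apply, smul_add]
    exact add_mem (ihy x hx) (ihz x hx)
  | neg y _ ihy =>
    intro x hx
    rw [LinearMap.neg_apply, smul_neg]
    exact neg_mem (ihy x hx)

theorem IsHeckeFamily.hasCommonDenominator_heckeTower {L : Submodule O V}
    {W : Subring (Module.End K V)} {T : ℕ → Module.End K V} {N m : ℕ} (hT : IsHeckeFamily W T N)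
    (hW : HasCommonDenominator L (W : Set (Module.End K V)))
    (hTj : ∀ j < N, HasCommonDenominator L {T j}) (hm : m ≤ N) :
    HasCommonDenominator L (heckeTower W T m : Set (Module.End K V)) := by
  induction m with
  | zero => rwa [heckeTower_zero]
  | succ m ih =>
    obtain ⟨d, hd, h⟩ := (ih (Nat.le_of_succ_le hm)).bimoduleSpan (hTj m hm)
    exact ⟨d, hd, fun a ha => h a (hT.heckeTower_succ_le hm ha)⟩

end CommonDenominator

section Valuation

variable {X K Γ : Type*} [Field K] [LinearOrderedCommGroupWithZero Γ] {v : Valuation K Γ}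

variable (X v) in
/-- The lattice of functions all of whose values are integral. -/
def integralFunctions : Submodule v.integer (X → K) where
  carrier := {F | ∀ x, v (F x) ≤ 1}
  add_mem' hF hG x := v.map_add_le (hF x) (hG x)
  zero_mem' x := by simp
  smul_mem' c F hF x := by
    rw [Pi.smul_apply, Subring.smul_def, smul_eq_mul, map_mul]
    exact mul_le_one' c.2 (hF x)

theorem hasCommonDenominator_singleton [Finite X] (t : Module.End K (X → K)) :
    HasCommonDenominator (integralFunctions X v) {t} := by
  have := Fintype.ofFinite X
  have := (Valuation.integer.integers v).isFractionRing
  obtain ⟨d, hd⟩ := IsLocalization.exist_integer_multiples_of_finite (nonZeroDivisors v.integer)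
    fun p : X × X => t (Pi.single p.2 1) p.1
  refine ⟨d, nonZeroDivisors.ne_zero d.2, ?_⟩
  simp only [Set.mem_singleton_iff, forall_eq]
  intro F hF x
  have entry_le_one (y : X) : v (d * t (Pi.single y 1) x) ≤ 1 := by
    obtain ⟨c, hc⟩ := hd (x, y)
    exact (congrArg v hc).symm.trans_le c.2
  have expand : (((d : v.integer) • t F) x : K) = ∑ y, d * t (Pi.single y 1) x * F y := by
    conv_lhs => rw [pi_eq_sum_univ' F, map_sum]
    simp [Finset.mul_sum, Subring.smul_def, Finset.sum_apply, mul_comm, mul_left_comm]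
  rw [expand]
  refine v.map_sum_le fun y _ => ?_
  rw [map_mul]
  exact mul_le_one' (entry_le_one y) (hF y)

theorem valuation_le_one_of_mul_pow_le_one [MulArchimedean Γ] {c d : K} (hd : d ≠ 0)
    (h : ∀ k : ℕ, v (d * c ^ k) ≤ 1) : v c ≤ 1 := by
  by_contra! hc
  have hd' : 0 < v d := v.pos_iff.mpr hd
  obtain ⟨k, hk⟩ := MulArchimedean.arch (v d)⁻¹ hc
  have : v c ≤ v (d * c ^ (k + 1)) := by
    rw [map_mul, map_pow, pow_succ, ← mul_assoc]
    exact le_mul_of_one_le_left' ((inv_le_iff_one_le_mul₀' hd').mp hk)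
  exact absurd (this.trans (h _)) hc.not_ge

end Valuation

/-! ### Young's seminormal form -/

section Coefficients

variable {K : Type*} [Field K]

/-- The diagonal coefficient of a generator of the Hecke algebra in Young's seminormal form, for
adjacent entries with contents `u` and `w`. -/
def diagCoeff (q u w : K) : K := (q - 1) * w / (w - u)

/-- The product of the two off-diagonal coefficients of a generator of the Hecke algebra in Young's
seminormal form, for adjacent entries with contents `u` and `w`. -/
def normFactor (q u w : K) : K := (q * w - u) * (w - q * u) / (w - u) ^ 2

variable (q : K) {a b c : K}

theorem normFactor_comm (a b : K) : normFactor q a b = normFactor q b a := by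
  unfold normFactor
  rw [← neg_sub b a, neg_sq]
  congr 1
  ring

theorem diagCoeff_add_swap (hab : a ≠ b) : diagCoeff q a b + diagCoeff q b a = q - 1 := by
  have := sub_ne_zero.mpr hab.symm
  rw [diagCoeff, diagCoeff, ← neg_sub b a, div_neg]
  field_simp
  ring

theorem diagCoeff_quadratic (hab : a ≠ b) :
    diagCoeff q a b * diagCoeff q a b + normFactor q a b = (q - 1) * diagCoeff q a b + q := by
  have := sub_ne_zero.mpr hab.symm
  unfold diagCoeff normFactor
  field_simp
  ring

theorem diagCoeff_mul_sub (hab : a ≠ b) : diagCoeff q a b * (b - a) = (q - 1) * b :=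
  div_mul_cancel₀ _ (sub_ne_zero.mpr hab.symm)

theorem diagCoeff_triangle_left (hab : a ≠ b) (hac : a ≠ c) (hbc : b ≠ c) :
    diagCoeff q a b * diagCoeff q b c + diagCoeff q a c * diagCoeff q b a =
      diagCoeff q b c * diagCoeff q a c := by
  have h₁ := sub_ne_zero.mpr hab.symm
  have h₂ := sub_ne_zero.mpr hac.symm
  have h₃ := sub_ne_zero.mpr hbc.symm
  unfold diagCoeff
  rw [← neg_sub b a, div_neg]
  field_simp
  ring

theorem diagCoeff_triangle_right (hab : a ≠ b) (hac : a ≠ c) (hbc : b ≠ c) :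
    diagCoeff q a b * diagCoeff q a c =
      diagCoeff q b c * diagCoeff q a b + diagCoeff q a c * diagCoeff q c b := by
  have h₁ := sub_ne_zero.mpr hab.symm
  have h₂ := sub_ne_zero.mpr hac.symm
  have h₃ := sub_ne_zero.mpr hbc.symm
  unfold diagCoeff
  rw [← neg_sub c b, div_neg]
  field_simp
  ring

theorem diagCoeff_braid (hab : a ≠ b) (hac : a ≠ c) (hbc : b ≠ c) :
    diagCoeff q a b * diagCoeff q a b * diagCoeff q b c + normFactor q a b * diagCoeff q a c =
      diagCoeff q b c * diagCoeff q b c * diagCoeff q a b + normFactor q b c * diagCoeff q a c := by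
  have h₁ := sub_ne_zero.mpr hab.symm
  have h₂ := sub_ne_zero.mpr hac.symm
  have h₃ := sub_ne_zero.mpr hbc.symm
  unfold diagCoeff normFactor
  field_simp
  ring

end Coefficients

section LinExt

/-- Linear extensions of the relation `R`, encoded by the position of each element. -/
abbrev LinExt {P : Type*} (R : P → P → Prop) (n : ℕ) : Type _ :=
  {x : P ≃ Fin n // ∀ A B, R A B → x A < x B}

variable {P : Type*} {R : P → P → Prop} {n : ℕ}

theorem LinExt.isLinExt_swap (x : LinExt R n) {i j : Fin n} (hij : j.1 = i.1 + 1)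
    (h : ¬ R (x.1.symm i) (x.1.symm j)) :
    ∀ A B, R A B → x.1.trans (Equiv.swap i j) A < x.1.trans (Equiv.swap i j) B := by
  intro A B hAB
  have hx := x.2 A B hAB
  have hne : ¬ (x.1 A = i ∧ x.1 B = j) := by
    rintro ⟨rfl, rfl⟩
    simp [hAB] at h
  simp only [Equiv.trans_apply, Equiv.swap_apply_def]
  grind

theorem LinExt.exists_eq_restrict {K : Type*} [Zero K] (F : LinExt R n → K) :
    ∃ G : (P ≃ Fin n) → K, (∀ x, (∃ A B, R A B ∧ ¬ x A < x B) → G x = 0) ∧ F = fun x => G x.1 :=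
  ⟨Function.extend Subtype.val F 0,
    fun _ ⟨A, B, hAB, h⟩ => Function.extend_apply' _ _ _ fun ⟨y, hy⟩ => h (hy ▸ y.2 A B hAB),
    funext fun x => (Subtype.val_injective.extend_apply _ _ x).symm⟩

end LinExt

section SeminormalOperators

variable {K P : Type*} [Field K] [LinearOrder P] {R : P → P → Prop} {n : ℕ} {q : K} {u : P → K}

variable (R q u) in
/-- The off-diagonal coefficient of a generator of the Hecke algebra when `A` and `B` occupy
adjacent positions. The vanishing for `R`-related entries confines the seminormal operators to
linear extensions. -/
noncomputable def offDiagCoeff (A B : P) : K :=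
  if R A B then 0 else if B < A then 1 else normFactor q (u A) (u B)

theorem offDiagCoeff_mul_swap {A B : P} (hne : A ≠ B) (hR : R A B → normFactor q (u A) (u B) = 0)
    (hR' : ¬ R B A) :
    offDiagCoeff R q u A B * offDiagCoeff R q u B A = normFactor q (u A) (u B) := by
  by_cases h : R A B
  · simp [offDiagCoeff, h, hR]
  · rcases hne.lt_or_gt with hlt | hlt
    · simp [offDiagCoeff, h, hR', hlt, hlt.le]
    · simp [offDiagCoeff, h, hR', hlt, hlt.le, normFactor_comm q (u A)]

variable (R q u) in
/-- Young's seminormal formula for the action of a generator of the Hecke algebra exchanging the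
positions `i` and `j`, as an operator on functions of all orderings of `P`. The relations of the
Hecke algebra only hold for the values at linear extensions. -/
noncomputable def orderingOp (i j : Fin n) : Module.End K ((P ≃ Fin n) → K) where
  toFun F x := diagCoeff q (u (x.symm i)) (u (x.symm j)) * F x +
    offDiagCoeff R q u (x.symm i) (x.symm j) * F (x.trans (Equiv.swap i j))
  map_add' F G := by ext x; simp only [Pi.add_apply]; ring
  map_smul' c F := by ext x; simp only [Pi.smul_apply, smul_eq_mul, RingHom.id_apply]; ring

theorem orderingOp_apply (i j : Fin n) (F : (P ≃ Fin n) → K) (x : P ≃ Fin n) :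
    orderingOp R q u i j F x = diagCoeff q (u (x.symm i)) (u (x.symm j)) * F x +
      offDiagCoeff R q u (x.symm i) (x.symm j) * F (x.trans (Equiv.swap i j)) := rfl

theorem orderingOp_commute {i j k l : Fin n} (hik : i ≠ k) (hil : i ≠ l) (hjk : j ≠ k)
    (hjl : j ≠ l) : Commute (orderingOp R q u i j) (orderingOp R q u k l) := by
  refine LinearMap.ext fun F => funext fun x => ?_
  have hswap : (x.trans (Equiv.swap k l)).trans (Equiv.swap i j) =
      (x.trans (Equiv.swap i j)).trans (Equiv.swap k l) := by
    ext A
    simp only [Equiv.trans_apply, Equiv.swap_apply_def]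
    grind
  simp only [Module.End.mul_apply, orderingOp_apply, Equiv.symm_trans_apply, Equiv.symm_swap, hswap,
    Equiv.swap_apply_of_ne_of_ne hik hil, Equiv.swap_apply_of_ne_of_ne hjk hjl,
    Equiv.swap_apply_of_ne_of_ne hik.symm hjk.symm, Equiv.swap_apply_of_ne_of_ne hil.symm hjl.symm]
  ring

theorem orderingOp_quadratic {i j : Fin n} {x : P ≃ Fin n} (hu : u (x.symm i) ≠ u (x.symm j))
    (hN : offDiagCoeff R q u (x.symm i) (x.symm j) * offDiagCoeff R q u (x.symm j) (x.symm i) =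
      normFactor q (u (x.symm i)) (u (x.symm j))) (F : (P ≃ Fin n) → K) :
    orderingOp R q u i j (orderingOp R q u i j F) x =
      (q - 1) * orderingOp R q u i j F x + q * F x := by
  simp only [orderingOp_apply, Equiv.symm_trans_apply, Equiv.symm_swap, Equiv.swap_apply_left,
    Equiv.swap_apply_right, Equiv.trans_assoc, Equiv.swap_swap, Equiv.trans_refl]
  linear_combination (norm := ring) F x * hN + F x * diagCoeff_quadratic q hu +
    offDiagCoeff R q u (x.symm i) (x.symm j) * F (x.trans (Equiv.swap i j)) *
      diagCoeff_add_swap q hu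

theorem orderingOp_braid {i j k : Fin n} (hij : i ≠ j) (hik : i ≠ k) (hjk : j ≠ k) {x : P ≃ Fin n}
    {a b c : P} (ha : x.symm i = a) (hb : x.symm j = b) (hc : x.symm k = c)
    (hab : u a ≠ u b) (hac : u a ≠ u c) (hbc : u b ≠ u c)
    (hNab : offDiagCoeff R q u a b * offDiagCoeff R q u b a = normFactor q (u a) (u b))
    (hNbc : offDiagCoeff R q u b c * offDiagCoeff R q u c b = normFactor q (u b) (u c))
    (F : (P ≃ Fin n) → K) :
    orderingOp R q u i j (orderingOp R q u j k (orderingOp R q u i j F)) x =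
      orderingOp R q u j k (orderingOp R q u i j (orderingOp R q u j k F)) x := by
  have hswap : (Equiv.swap i j).trans ((Equiv.swap j k).trans (Equiv.swap i j)) =
      (Equiv.swap j k).trans ((Equiv.swap i j).trans (Equiv.swap j k)) := by
    ext m
    simp only [Equiv.trans_apply, Equiv.swap_apply_def]
    grind
  simp only [orderingOp_apply, Equiv.symm_trans_apply, Equiv.symm_swap, Equiv.swap_apply_left,
    Equiv.swap_apply_right, Equiv.trans_assoc, Equiv.swap_swap, Equiv.trans_refl,
    Equiv.swap_apply_of_ne_of_ne hij hik, Equiv.swap_apply_of_ne_of_ne hik.symm hjk.symm,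
    ha, hb, hc, hswap]
  linear_combination (norm := ring)
    F x * (diagCoeff_braid q hab hac hbc + diagCoeff q (u a) (u c) * (hNab - hNbc)) +
    offDiagCoeff R q u a b * F (x.trans (Equiv.swap i j)) *
      diagCoeff_triangle_left q hab hac hbc +
    offDiagCoeff R q u b c * F (x.trans (Equiv.swap j k)) *
      diagCoeff_triangle_right q hab hac hbc

variable (R q u) in
/-- Young's seminormal formula as an operator on functions of linear extensions. -/
noncomputable def seminormalOp (i j : Fin n) : Module.End K (LinExt R n → K) :=
  LinearMap.funLeft K K Subtype.val ∘ₗ orderingOp R q u i j ∘ₗ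
    Function.ExtendByZero.linearMap K Subtype.val

theorem orderingOp_congr {i j : Fin n} (hij : j.1 = i.1 + 1) (x : LinExt R n)
    {F G : (P ≃ Fin n) → K} (h : ∀ y : LinExt R n, F y.1 = G y.1) :
    orderingOp R q u i j F x.1 = orderingOp R q u i j G x.1 := by
  rw [orderingOp_apply, orderingOp_apply, h x]
  congr 1
  by_cases hR : R (x.1.symm i) (x.1.symm j)
  · simp [offDiagCoeff, hR]
  · exact congrArg _ (h ⟨_, x.isLinExt_swap hij hR⟩)

theorem seminormalOp_restrict {i j : Fin n} (hij : j.1 = i.1 + 1) (F : (P ≃ Fin n) → K) :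
    seminormalOp R q u i j (fun x => F x.1) = fun x => orderingOp R q u i j F x.1 :=
  funext fun x => orderingOp_congr hij x fun y =>
    Subtype.val_injective.extend_apply (fun x : LinExt R n => F x.1) 0 y

variable (R n q u) in
/-- The genericity under which the seminormal operators satisfy the relations of the Hecke algebra:
nearby entries of a linear extension have different contents, and adjacent entries that must not be
exchanged have contents with ratio `q` or `q⁻¹`. -/
structure IsSeminormalContent : Prop where
  ne : ∀ (x : LinExt R n) (i j : Fin n), i < j → j.1 ≤ i.1 + 2 → u (x.1.symm i) ≠ u (x.1.symm j)
  normFactor_eq_zero : ∀ (x : LinExt R n) (i j : Fin n), j.1 = i.1 + 1 →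
    R (x.1.symm i) (x.1.symm j) → normFactor q (u (x.1.symm i)) (u (x.1.symm j)) = 0

namespace IsSeminormalContent

variable (hu : IsSeminormalContent R n q u)
include hu

theorem offDiagCoeff_mul_swap (x : LinExt R n) {i j : Fin n} (hij : j.1 = i.1 + 1) :
    offDiagCoeff R q u (x.1.symm i) (x.1.symm j) * offDiagCoeff R q u (x.1.symm j) (x.1.symm i) =
      normFactor q (u (x.1.symm i)) (u (x.1.symm j)) := by
  have hlt : i < j := by omega
  refine Paper.offDiagCoeff_mul_swap (x.1.symm.injective.ne hlt.ne)
    (hu.normFactor_eq_zero x i j hij) fun h => ?_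
  simpa [hlt.not_gt] using x.2 _ _ h

theorem seminormalOp_quadratic {i j : Fin n} (hij : j.1 = i.1 + 1) :
    seminormalOp R q u i j * seminormalOp R q u i j =
      algebraMap K _ (q - 1) * seminormalOp R q u i j + algebraMap K _ q := by
  refine LinearMap.ext fun F => ?_
  obtain ⟨G, -, rfl⟩ := LinExt.exists_eq_restrict F
  simp only [Module.End.mul_apply, LinearMap.add_apply, seminormalOp_restrict hij]
  exact funext fun x => orderingOp_quadratic (hu.ne x i j (by omega) (by omega))
    (hu.offDiagCoeff_mul_swap x hij) G

theorem seminormalOp_braid {i j k : Fin n} (hij : j.1 = i.1 + 1) (hjk : k.1 = j.1 + 1) :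
    seminormalOp R q u i j * seminormalOp R q u j k * seminormalOp R q u i j =
      seminormalOp R q u j k * seminormalOp R q u i j * seminormalOp R q u j k := by
  refine LinearMap.ext fun F => ?_
  obtain ⟨G, -, rfl⟩ := LinExt.exists_eq_restrict F
  simp only [Module.End.mul_apply, seminormalOp_restrict hij, seminormalOp_restrict hjk]
  exact funext fun x => orderingOp_braid (by omega) (by omega) (by omega) rfl rfl rfl
    (hu.ne x i j (by omega) (by omega)) (hu.ne x i k (by omega) (by omega))
    (hu.ne x j k (by omega) (by omega)) (hu.offDiagCoeff_mul_swap x hij)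
    (hu.offDiagCoeff_mul_swap x hjk) G

end IsSeminormalContent

theorem seminormalOp_commute {i j k l : Fin n} (hij : j.1 = i.1 + 1) (hkl : l.1 = k.1 + 1)
    (hjk : j < k) : Commute (seminormalOp R q u i j) (seminormalOp R q u k l) := by
  refine LinearMap.ext fun F => ?_
  obtain ⟨G, -, rfl⟩ := LinExt.exists_eq_restrict F
  simp only [Module.End.mul_apply, seminormalOp_restrict hij, seminormalOp_restrict hkl]
  exact funext fun x => congrFun (LinearMap.congr_fun (orderingOp_commute (by omega) (by omega)
    (by omega) (by omega)).eq G) x.1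

end SeminormalOperators

section GramWeight

variable {K P : Type*} [Field K] [Fintype P] [LinearOrder P] {R : P → P → Prop} {n : ℕ}

/-- The pairs of elements of `P` which the ordering `x` lists in the wrong order. -/
def inversions (x : P ≃ Fin n) : Finset (P × P) := {z | z.1 < z.2 ∧ x z.2 < x z.1}

theorem notMem_inversions {x : P ≃ Fin n} {i j : Fin n} (hij : i < j) :
    (x.symm i, x.symm j) ∉ inversions x := by
  simp [inversions, hij.le]

theorem inversions_trans_swap {x : P ≃ Fin n} {i j : Fin n} (hij : j.1 = i.1 + 1)
    (hlt : x.symm i < x.symm j) :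
    inversions (x.trans (Equiv.swap i j)) = insert (x.symm i, x.symm j) (inversions x) := by
  ext ⟨A, B⟩
  obtain ⟨a, rfl⟩ := x.symm.surjective A
  obtain ⟨b, rfl⟩ := x.symm.surjective B
  have hba : a = j → b = i → ¬ x.symm a < x.symm b := by
    rintro rfl rfl
    exact hlt.not_gt
  simp only [inversions, Finset.mem_filter_univ, Finset.mem_insert, Prod.mk.injEq,
    EmbeddingLike.apply_eq_iff_eq, Equiv.trans_apply, Equiv.apply_symm_apply, Equiv.swap_apply_def]
  grind

theorem card_inversions_trans_swap {x : P ≃ Fin n} {i j : Fin n} (hij : j.1 = i.1 + 1)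
    (hlt : x.symm i < x.symm j) :
    (inversions (x.trans (Equiv.swap i j))).card = (inversions x).card + 1 := by
  rw [inversions_trans_swap hij hlt,
    Finset.card_insert_of_notMem (notMem_inversions (by omega))]

theorem card_inversions_le_trans_swap (x : P ≃ Fin n) {i j : Fin n} (hij : j.1 = i.1 + 1) :
    (inversions x).card ≤ (inversions (x.trans (Equiv.swap i j))).card + 1 := by
  rcases le_or_gt (x.symm i) (x.symm j) with h | h
  · have := card_inversions_trans_swap hij (h.lt_of_ne (x.symm.injective.ne (by omega)))
    omega
  · have := card_inversions_trans_swap (x := x.trans (Equiv.swap i j)) hij (by simpa using h)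
    simp [Equiv.trans_assoc] at this
    omega

variable (q : K) (u : P → K)

/-- The squared norm of the seminormal basis vector indexed by `x`, relative to that of the vector
indexed by the increasing ordering. -/
def gramWeight (x : P ≃ Fin n) : K := ∏ z ∈ inversions x, normFactor q (u z.1) (u z.2)

theorem gramWeight_trans_swap {x : P ≃ Fin n} {i j : Fin n} (hij : j.1 = i.1 + 1)
    (hlt : x.symm i < x.symm j) :
    gramWeight q u (x.trans (Equiv.swap i j)) =
      normFactor q (u (x.symm i)) (u (x.symm j)) * gramWeight q u x := by
  rw [gramWeight, inversions_trans_swap hij hlt,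
    Finset.prod_insert (notMem_inversions (by omega)), gramWeight]

theorem gramWeight_mul_offDiagCoeff {x : P ≃ Fin n} {i j : Fin n} (hij : j.1 = i.1 + 1)
    (h : ¬ R (x.symm i) (x.symm j)) (h' : ¬ R (x.symm j) (x.symm i)) :
    gramWeight q u x * offDiagCoeff R q u (x.symm i) (x.symm j) =
      gramWeight q u (x.trans (Equiv.swap i j)) * offDiagCoeff R q u (x.symm j) (x.symm i) := by
  rcases (x.symm.injective.ne (a₁ := i) (a₂ := j) (by omega)).lt_or_gt with hlt | hlt
  · rw [gramWeight_trans_swap q u hij hlt]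
    simp [offDiagCoeff, h, h', hlt, hlt.not_gt, mul_comm]
  · have := gramWeight_trans_swap q u (x := x.trans (Equiv.swap i j)) hij (by simpa using hlt)
    simp only [Equiv.trans_assoc, Equiv.swap_swap, Equiv.trans_refl, Equiv.symm_trans_apply,
      Equiv.symm_swap, Equiv.swap_apply_left, Equiv.swap_apply_right] at this
    rw [this]
    simp [offDiagCoeff, h, h', hlt, hlt.not_gt, mul_comm]

end GramWeight

section SeminormalForm

variable {K P : Type*} [Field K] [Fintype P] [LinearOrder P] {R : P → P → Prop} {n : ℕ}

theorem LinExt.sum_eq_sum {F : (P ≃ Fin n) → K} (hF : ∀ x, (∃ A B, R A B ∧ ¬ x A < x B) → F x = 0) :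
    ∑ x : LinExt R n, F x.1 = ∑ x, F x :=
  Fintype.sum_of_injective Subtype.val Subtype.val_injective _ _
    (fun x hx => hF x (by simpa using hx)) fun _ => rfl

variable (R n) in
/-- The bilinear form for which the seminormal basis is orthogonal and the Hecke algebra generators
are self-adjoint. -/
noncomputable def seminormalForm (q : K) (u : P → K) : LinearMap.BilinForm K (LinExt R n → K) :=
  Matrix.toBilin' (Matrix.diagonal fun x => gramWeight q u x.1)

theorem seminormalForm_apply (q : K) (u : P → K) (F G : LinExt R n → K) :
    seminormalForm R n q u F G = ∑ x, gramWeight q u x.1 * F x * G x := by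
  simp only [seminormalForm, Matrix.toBilin'_apply', Matrix.mulVec_diagonal, dotProduct]
  exact Finset.sum_congr rfl fun x _ => by ring

theorem isAdjointPair_seminormalOp (q : K) (u : P → K) {i j : Fin n} (hij : j.1 = i.1 + 1) :
    LinearMap.IsAdjointPair (seminormalForm R n q u) (seminormalForm R n q u)
      (seminormalOp R q u i j) (seminormalOp R q u i j) := by
  intro F G
  obtain ⟨F, hF, rfl⟩ := LinExt.exists_eq_restrict F
  obtain ⟨G, hG, rfl⟩ := LinExt.exists_eq_restrict G
  simp only [seminormalForm_apply, seminormalOp_restrict hij]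
  rw [LinExt.sum_eq_sum (F := fun x => gramWeight q u x * orderingOp R q u i j F x * G x)
      fun x hx => by rw [hG x hx, mul_zero],
    LinExt.sum_eq_sum (F := fun x => gramWeight q u x * F x * orderingOp R q u i j G x)
      fun x hx => by rw [hF x hx, mul_zero, zero_mul]]
  simp only [orderingOp_apply, mul_add, add_mul, Finset.sum_add_distrib]
  congr 1
  · exact Finset.sum_congr rfl fun x _ => by ring
  have hswap : Function.Involutive fun x : P ≃ Fin n => x.trans (Equiv.swap i j) := fun x => by
    simp [Equiv.trans_assoc]
  rw [← Equiv.sum_comp hswap.toPerm fun x => gramWeight q u x * F x * _]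
  refine Finset.sum_congr rfl fun x _ => ?_
  simp only [Function.Involutive.coe_toPerm, Equiv.trans_assoc, Equiv.swap_swap, Equiv.trans_refl,
    Equiv.symm_trans_apply, Equiv.symm_swap, Equiv.swap_apply_left, Equiv.swap_apply_right]
  by_cases h : R (x.symm i) (x.symm j)
  · rw [hF (x.trans (Equiv.swap i j)) ⟨_, _, h, by simp; omega⟩]
    ring
  by_cases h' : R (x.symm j) (x.symm i)
  · rw [hG x ⟨_, _, h', by simp; omega⟩]
    ring
  linear_combination F (x.trans (Equiv.swap i j)) * G x * gramWeight_mul_offDiagCoeff q u hij h h'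

end SeminormalForm

section ContentRing

variable {K Γ P : Type*} [Field K] [LinearOrderedCommGroupWithZero Γ] {v : Valuation K Γ}
  {R : P → P → Prop} {n : ℕ} {q : K} {u : P → K}

variable (v R n u) in
/-- The ring generated by the integral constants and by the eigenvalues of the Jucys–Murphy
elements: the `k`-th of these takes a linear extension to the content of its `k`-th entry. -/
def contentRing : Subring (LinExt R n → K) :=
  Subring.closure (Set.range (fun k x => u (x.1.symm k)) ∪
    Set.range fun (z : v.integer) _ => (z : K))

theorem content_mem_contentRing (k : Fin n) : (fun x => u (x.1.symm k)) ∈ contentRing v R n u :=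
  Subring.subset_closure (Or.inl ⟨k, rfl⟩)

theorem const_mem_contentRing {z : K} (hz : v z ≤ 1) : (fun _ => z) ∈ contentRing v R n u :=
  Subring.subset_closure (Or.inr ⟨⟨z, hz⟩, rfl⟩)

theorem valuation_le_one_of_mem_contentRing (hu : ∀ A, v (u A) ≤ 1) {F : LinExt R n → K}
    (hF : F ∈ contentRing v R n u) (x : LinExt R n) : v (F x) ≤ 1 := by
  refine (Subring.closure_le (t := v.integer.comap (Pi.evalRingHom (fun _ => K) x))).mpr ?_ hF
  rintro _ (⟨k, rfl⟩ | ⟨z, rfl⟩)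
  exacts [hu _, z.2]

theorem diagCoeff_mul_sub_mem_contentRing (hu : IsSeminormalContent R n q u) (hq : v q ≤ 1)
    {i j : Fin n} (hij : j.1 = i.1 + 1) (k : Fin n) :
    (fun x => diagCoeff q (u (x.1.symm i)) (u (x.1.symm j)) *
      (u (x.1.symm k) - u (x.1.symm (Equiv.swap i j k)))) ∈ contentRing v R n u := by
  have hmem : (fun x : LinExt R n => (q - 1) * u (x.1.symm j)) ∈ contentRing v R n u :=
    mul_mem (const_mem_contentRing (v.map_sub_le hq v.map_one.le)) (content_mem_contentRing j)
  have hdiag (x : LinExt R n) := diagCoeff_mul_sub q (hu.ne x i j (by omega) (by omega))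
  rcases eq_or_ne k i with rfl | hki
  · convert neg_mem hmem using 1
    ext x
    rw [Equiv.swap_apply_left, Pi.neg_apply, ← hdiag, ← mul_neg, neg_sub]
  rcases eq_or_ne k j with rfl | hkj
  · simpa only [Equiv.swap_apply_right, hdiag] using hmem
  · simp only [Equiv.swap_apply_of_ne_of_ne hki hkj, sub_self, mul_zero]
    exact zero_mem (contentRing v R n u)

variable (v R n u) in
/-- The operators of multiplication by the elements of `contentRing`. -/
def contentOperators : Subring (Module.End K (LinExt R n → K)) :=
  (contentRing v R n u).map (Algebra.lmul K (LinExt R n → K)).toRingHom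

theorem lmul_mem_contentOperators {F : LinExt R n → K} (hF : F ∈ contentRing v R n u) :
    Algebra.lmul K _ F ∈ contentOperators v R n u :=
  ⟨F, hF, rfl⟩

variable [LinearOrder P]

theorem seminormalOp_mul_lmul_content {i j : Fin n} (hij : j.1 = i.1 + 1) (k : Fin n) :
    seminormalOp R q u i j * Algebra.lmul K _ (fun x => u (x.1.symm k)) =
      Algebra.lmul K _ (fun x => u (x.1.symm (Equiv.swap i j k))) * seminormalOp R q u i j +
        Algebra.lmul K _ (fun x => diagCoeff q (u (x.1.symm i)) (u (x.1.symm j)) *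
          (u (x.1.symm k) - u (x.1.symm (Equiv.swap i j k)))) := by
  refine LinearMap.ext fun F => ?_
  obtain ⟨G, -, rfl⟩ := LinExt.exists_eq_restrict F
  have hmul : Algebra.lmul K _ (fun x : LinExt R n => u (x.1.symm k)) (fun x => G x.1) =
      fun x => u (x.1.symm k) * G x.1 := rfl
  rw [Module.End.mul_apply, hmul, seminormalOp_restrict hij (fun x => u (x.symm k) * G x),
    LinearMap.add_apply, Module.End.mul_apply, seminormalOp_restrict hij]
  ext x
  simp only [orderingOp_apply, Algebra.coe_lmul_eq_mul, LinearMap.mul_apply', Pi.add_apply,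
    Pi.mul_apply, Equiv.symm_trans_apply, Equiv.symm_swap]
  ring

theorem slidesThrough_contentOperators (hu : IsSeminormalContent R n q u) (hq : v q ≤ 1)
    {i j : Fin n} (hij : j.1 = i.1 + 1) :
    SlidesThrough (seminormalOp R q u i j) (contentOperators v R n u) := by
  have hclosure : contentOperators v R n u = _ := RingHom.map_closure _ _
  rw [hclosure]
  refine .closure ?_ ?_ <;> rw [← hclosure]
  · rintro _ ⟨_, ⟨k, rfl⟩ | ⟨z, rfl⟩, rfl⟩
    · exact ⟨_, lmul_mem_contentOperators (content_mem_contentRing _), _,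
        lmul_mem_contentOperators (diagCoeff_mul_sub_mem_contentRing hu hq hij k),
        seminormalOp_mul_lmul_content hij k⟩
    · exact ⟨_, lmul_mem_contentOperators (const_mem_contentRing z.2), 0, zero_mem _,
        ((add_zero _).trans (Algebra.commutes (z : K) _)).symm⟩
  · rintro _ ⟨_, ⟨k, rfl⟩ | ⟨z, rfl⟩, rfl⟩
    · have h := seminormalOp_mul_lmul_content (R := R) (q := q) (u := u) hij (Equiv.swap i j k)
      rw [Equiv.swap_apply_self] at h
      refine ⟨_, lmul_mem_contentOperators (content_mem_contentRing (Equiv.swap i j k)), _,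
        neg_mem (lmul_mem_contentOperators
          (diagCoeff_mul_sub_mem_contentRing hu hq hij (Equiv.swap i j k))), ?_⟩
      rw [Equiv.swap_apply_self]
      exact (eq_sub_of_add_eq h.symm).trans (sub_eq_add_neg _ _)
    · exact ⟨_, lmul_mem_contentOperators (const_mem_contentRing z.2), 0, zero_mem _,
        ((add_zero _).trans (Algebra.commutes (z : K) _).symm).symm⟩

end ContentRing

/-! ### The integral form and its Gram determinant -/

section IntegralHecke

variable {K Γ P : Type*} [Field K] [LinearOrderedCommGroupWithZero Γ] {v : Valuation K Γ}
  [LinearOrder P] {R : P → P → Prop} {n : ℕ} {q : K} {u : P → K}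

variable (R n q u) in
/-- The generators of the Hecke algebra in seminormal form, extended by zero to all indices. -/
noncomputable def seminormalGen (j : ℕ) : Module.End K (LinExt R n → K) :=
  if h : j + 1 < n then seminormalOp R q u ⟨j, j.lt_succ_self.trans h⟩ ⟨j + 1, h⟩ else 0

theorem seminormalGen_of_lt {j : ℕ} (h : j + 1 < n) : seminormalGen R n q u j =
    seminormalOp R q u ⟨j, j.lt_succ_self.trans h⟩ ⟨j + 1, h⟩ := dif_pos h

theorem isHeckeFamily_seminormalGen (hu : IsSeminormalContent R n q u) (hq : v q ≤ 1) :
    IsHeckeFamily (contentOperators v R n u) (seminormalGen R n q u) (n - 1) where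
  slides j hj := by
    rw [seminormalGen_of_lt (by omega)]
    exact slidesThrough_contentOperators hu hq rfl
  quadratic j hj := by
    rw [seminormalGen_of_lt (by omega)]
    exact ⟨_, lmul_mem_contentOperators
      (const_mem_contentRing (v.map_sub_le hq v.map_one.le)), _,
      lmul_mem_contentOperators (const_mem_contentRing hq), hu.seminormalOp_quadratic rfl⟩
  commute j k hjk hk := by
    rw [seminormalGen_of_lt (by omega), seminormalGen_of_lt (by omega)]
    exact (seminormalOp_commute rfl rfl hjk).symm
  braid j hj := by
    rw [seminormalGen_of_lt (by omega), seminormalGen_of_lt (by omega)]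
    exact hu.seminormalOp_braid rfl rfl

variable (v R n q u) in
/-- The integral form of the Hecke algebra generated by the content functions and the seminormal
operators. -/
noncomputable def integralHecke : Subring (Module.End K (LinExt R n → K)) :=
  heckeTower (contentOperators v R n u) (seminormalGen R n q u) (n - 1)

theorem lmul_mem_integralHecke {F : LinExt R n → K} (hF : F ∈ contentRing v R n u) :
    Algebra.lmul K _ F ∈ integralHecke v R n q u :=
  le_heckeTower (lmul_mem_contentOperators hF)

theorem seminormalOp_mem_integralHecke {i j : Fin n} (hij : j.1 = i.1 + 1) :
    seminormalOp R q u i j ∈ integralHecke v R n q u := by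
  obtain ⟨i, hi⟩ := i
  obtain ⟨j, hj⟩ := j
  obtain rfl : j = i + 1 := hij
  rw [← seminormalGen_of_lt hj]
  exact mem_heckeTower (by omega)

theorem hasCommonDenominator_integralHecke [Finite P] (hu : IsSeminormalContent R n q u)
    (hq : v q ≤ 1) (hint : ∀ A, v (u A) ≤ 1) :
    HasCommonDenominator (integralFunctions (LinExt R n) v)
      (integralHecke v R n q u : Set (Module.End K (LinExt R n → K))) := by
  refine (isHeckeFamily_seminormalGen hu hq).hasCommonDenominator_heckeTower ?_
    (fun j _ => hasCommonDenominator_singleton _) le_rfl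
  refine ⟨1, one_ne_zero, ?_⟩
  rintro _ ⟨f, hf, rfl⟩ F hF
  rw [one_smul]
  intro x
  rw [AlgHom.toRingHom_eq_coe, RingHom.coe_coe, Algebra.coe_lmul_eq_mul, LinearMap.mul_apply',
    Pi.mul_apply, map_mul]
  exact mul_le_one' (valuation_le_one_of_mem_contentRing hint hf x) (hF x)

theorem exists_isAdjointPair_integralHecke [Fintype P] {a : Module.End K (LinExt R n → K)}
    (ha : a ∈ integralHecke v R n q u) : ∃ a' ∈ integralHecke v R n q u,
      LinearMap.IsAdjointPair (seminormalForm R n q u) (seminormalForm R n q u) a a' := by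
  induction ha using Subring.closure_induction with
  | mem a ha =>
    rcases ha with ⟨f, hf, rfl⟩ | ⟨j, hj, rfl⟩
    · refine ⟨_, lmul_mem_integralHecke hf, fun F G => ?_⟩
      simp only [seminormalForm_apply]
      exact Finset.sum_congr rfl fun x _ => show _ * (f x * F x) * G x = _ * F x * (f x * G x) by
        ring
    · rw [Set.mem_Iio] at hj
      rw [seminormalGen_of_lt (by omega)]
      exact ⟨_, seminormalOp_mem_integralHecke rfl, isAdjointPair_seminormalOp q u rfl⟩
  | zero => exact ⟨0, zero_mem _, LinearMap.isAdjointPair_zero⟩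
  | one => exact ⟨1, one_mem _, LinearMap.isAdjointPair_one⟩
  | add x y _ _ ihx ihy =>
    obtain ⟨a, ha, hx⟩ := ihx
    obtain ⟨b, hb, hy⟩ := ihy
    exact ⟨a + b, add_mem ha hb, hx.add hy⟩
  | neg x _ ihx =>
    obtain ⟨a, ha, hx⟩ := ihx
    exact ⟨-a, neg_mem ha, by simpa using LinearMap.isAdjointPair_zero.sub hx⟩
  | mul x y _ _ ihx ihy =>
    obtain ⟨a, ha, hx⟩ := ihx
    obtain ⟨b, hb, hy⟩ := ihy
    exact ⟨b * a, mul_mem hb ha, hx.mul hy⟩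

/-- If `p` is supported at `x₀`, then `δ_{x₀}` is an eigenvector of `p * a` for every `a`, and the
powers of its eigenvalue have bounded denominators. -/
theorem valuation_apply_single_le_one [MulArchimedean Γ] [Finite P]
    [DecidableEq (LinExt R n)] (hu : IsSeminormalContent R n q u) (hq : v q ≤ 1)
    (hint : ∀ A, v (u A) ≤ 1) {x₀ : LinExt R n} {p : LinExt R n → K}
    (hp : p ∈ contentRing v R n u) (hp₀ : ∀ x ≠ x₀, p x = 0)
    {a : Module.End K (LinExt R n → K)} (ha : a ∈ integralHecke v R n q u) :
    v (p x₀ * a (Pi.single x₀ 1) x₀) ≤ 1 := by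
  set b := Algebra.lmul K _ p * a
  set c := p x₀ * a (Pi.single x₀ 1) x₀
  obtain ⟨d, hd, hb⟩ := hasCommonDenominator_integralHecke hu hq hint
  have hbc : b (Pi.single x₀ 1) = c • Pi.single x₀ (1 : K) := by
    ext x
    rcases eq_or_ne x x₀ with rfl | hx
    · simp [b, c]
    · simp [b, hx, hp₀ x hx]
  have hpow (k : ℕ) : (b ^ k) (Pi.single x₀ 1) = c ^ k • Pi.single x₀ (1 : K) := by
    induction k with
    | zero => simp
    | succ k ih => rw [pow_succ', Module.End.mul_apply, ih, map_smul, hbc, smul_smul, pow_succ]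
  have hsingle : Pi.single x₀ (1 : K) ∈ integralFunctions (LinExt R n) v := fun x => by
    rcases eq_or_ne x x₀ with rfl | hx <;> simp [*]
  refine valuation_le_one_of_mul_pow_le_one (d := (d : K)) (by simpa using hd) fun k => ?_
  have := hb _ (pow_mem (mul_mem (lmul_mem_integralHecke hp) ha) k) _ hsingle x₀
  rw [hpow] at this
  simpa [Subring.smul_def] using this

end IntegralHecke

section Triangular

variable {K Γ P : Type*} [Field K] [LinearOrderedCommGroupWithZero Γ] {v : Valuation K Γ}
  [LinearOrder P] {R : P → P → Prop} {n : ℕ} {q : K} {u : P → K}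

/-- The increasing ordering as a linear extension of a relation contained in `<`. -/
def LinExt.base (ι : P ≃o Fin n) (hR : ∀ A B, R A B → A < B) : LinExt R n :=
  ⟨ι.toEquiv, fun A B h => ι.strictMono (hR A B h)⟩

theorem exists_descent {ι : P ≃o Fin n} {t : P ≃ Fin n} (ht : t ≠ ι.toEquiv) :
    ∃ i j : Fin n, j.1 = i.1 + 1 ∧ t.symm j < t.symm i := by
  by_contra! hc
  have hmono : StrictMono t.symm := by
    cases n with
    | zero => exact fun i => i.elim0
    | succ n => exact Fin.strictMono_iff_lt_succ.mpr fun i =>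
        (hc i.castSucc i.succ rfl).lt_of_ne (t.symm.injective.ne i.castSucc_lt_succ.ne)
  have : hmono.orderIsoOfSurjective _ t.symm.surjective = ι.symm := Subsingleton.elim _ _
  refine ht (Equiv.symm_bijective.injective (Equiv.ext fun k => ?_))
  exact DFunLike.congr_fun this k

theorem seminormalOp_apply_of_swap {i j : Fin n} (hij : j.1 = i.1 + 1) (F : LinExt R n → K)
    {t x : LinExt R n} (hx : t.1.trans (Equiv.swap i j) = x.1) :
    seminormalOp R q u i j F t = diagCoeff q (u (t.1.symm i)) (u (t.1.symm j)) * F t +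
      offDiagCoeff R q u (t.1.symm i) (t.1.symm j) * F x := by
  obtain ⟨G, -, rfl⟩ := LinExt.exists_eq_restrict F
  simp only [seminormalOp_restrict hij, orderingOp_apply, hx]

theorem seminormalOp_apply_eq_zero {i j : Fin n} (hij : j.1 = i.1 + 1) {F : LinExt R n → K}
    {t : LinExt R n} (ht : F t = 0)
    (h : ∀ x : LinExt R n, t.1.trans (Equiv.swap i j) = x.1 → F x = 0) :
    seminormalOp R q u i j F t = 0 := by
  by_cases hR : R (t.1.symm i) (t.1.symm j)
  · obtain ⟨G, -, rfl⟩ := LinExt.exists_eq_restrict F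
    simp only [seminormalOp_restrict hij, orderingOp_apply, ht, offDiagCoeff, if_pos hR]
    ring
  · rw [seminormalOp_apply_of_swap hij F (x := ⟨_, t.isLinExt_swap hij hR⟩) rfl, ht, h _ rfl]
    ring

/-- Peeling off a descent of `t` writes `δ_t`, up to longer terms, as `T_i` applied to a vector
which is triangular for a linear extension with one inversion less. -/
theorem exists_triangular [Fintype P] (ι : P ≃o Fin n) (hR : ∀ A B, R A B → A < B)
    (t : LinExt R n) : ∃ a ∈ integralHecke v R n q u, a (Pi.single (.base ι hR) 1) t = 1 ∧
      ∀ s ≠ t, (inversions t.1).card ≤ (inversions s.1).card →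
        a (Pi.single (.base ι hR) 1) s = 0 := by
  induction hm : (inversions t.1).card using Nat.strong_induction_on generalizing t with
  | _ m ih =>
  subst hm
  by_cases ht : t = .base ι hR
  · subst ht
    exact ⟨1, one_mem _, by simp, fun s hs _ => by simp [hs]⟩
  obtain ⟨i, j, hij, hlt⟩ := exists_descent (ι := ι) (t := t.1) (fun h => ht (Subtype.ext h))
  have hnR : ¬ R (t.1.symm i) (t.1.symm j) := fun h => hlt.not_gt (hR _ _ h)
  let x : LinExt R n := ⟨_, t.isLinExt_swap hij hnR⟩
  have hxt : x.1.trans (Equiv.swap i j) = t.1 := by simp [x, Equiv.trans_assoc]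
  have hcard : (inversions t.1).card = (inversions x.1).card + 1 := by
    rw [← hxt]
    exact card_inversions_trans_swap hij (by simpa [x] using hlt)
  obtain ⟨a, ha, hax, has⟩ := ih _ (by omega) x rfl
  have hne : t ≠ x := fun h => by rw [← h] at hcard; omega
  refine ⟨_, mul_mem (seminormalOp_mem_integralHecke (q := q) hij) ha, ?_, fun s hst hs => ?_⟩
  · rw [Module.End.mul_apply, seminormalOp_apply_of_swap hij _ (x := x) rfl, hax,
      has t hne (by omega), offDiagCoeff, if_neg hnR, if_pos hlt, mul_zero, zero_add, mul_one]
  · have hsx : s ≠ x := fun h => by rw [h] at hs; omega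
    refine seminormalOp_apply_eq_zero hij (has s hsx (by omega)) fun y hy => has y ?_ ?_
    · rintro rfl
      exact hst (Subtype.ext (by rw [← hxt, ← hy]; simp [Equiv.trans_assoc]))
    · have := card_inversions_le_trans_swap s.1 hij
      rw [hy] at this
      omega

end Triangular

section Gram

theorem det_eq_prod_diag {ι S : Type*} [Fintype ι] [DecidableEq ι] [CommRing S] (M : Matrix ι ι S)
    (b : ι → ℕ) (h : ∀ s t, s ≠ t → b s ≤ b t → M s t = 0) : M.det = ∏ s, M s s := by
  have hM : M.BlockTriangular (OrderDual.toDual ∘ b) := fun s t hst =>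
    h s t (by rintro rfl; exact lt_irrefl _ hst) (le_of_lt hst)
  have hblock (k : ℕᵒᵈ) : (M.toSquareBlock (OrderDual.toDual ∘ b) k).det =
      ∏ s with (OrderDual.toDual ∘ b) s = k, M s s := by
    have : M.toSquareBlock (OrderDual.toDual ∘ b) k = Matrix.diagonal fun s => M s.1 s.1 := by
      ext s t
      rcases eq_or_ne s t with rfl | hst
      · simp [Matrix.toSquareBlock_def]
      · have hb : b s = b t := s.2.trans t.2.symm
        simp [Matrix.toSquareBlock_def, hst, h s t (Subtype.coe_ne_coe.mpr hst) hb.le]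
    rw [this, Matrix.det_diagonal]
    exact (Finset.prod_subtype _ (by simp) fun s => M s s).symm
  rw [hM.det]
  simp only [hblock]
  exact Finset.prod_fiberwise_of_maps_to
    (fun s _ => Finset.mem_image_of_mem _ (Finset.mem_univ s)) _

variable {K Γ P : Type*} [Field K] [LinearOrderedCommGroupWithZero Γ] {v : Valuation K Γ}

theorem valuation_det_le_one {ι : Type*} [Fintype ι] [DecidableEq ι] {M : Matrix ι ι K}
    (hM : ∀ s t, v (M s t) ≤ 1) : v M.det ≤ 1 := by
  rw [← Valuation.mem_integer_iff, Matrix.det_apply']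
  exact sum_mem fun σ _ => mul_mem (intCast_mem _ _) (prod_mem fun s _ => hM _ _)

variable [Fintype P] [LinearOrder P] {R : P → P → Prop} {n : ℕ} {q : K} {u : P → K}

theorem valuation_mul_seminormalForm_le_one [MulArchimedean Γ] (hu : IsSeminormalContent R n q u)
    (hq : v q ≤ 1) (hint : ∀ A, v (u A) ≤ 1) {ι : P ≃o Fin n} {hR : ∀ A B, R A B → A < B}
    {p : LinExt R n → K} (hp : p ∈ contentRing v R n u) (hp₀ : ∀ x ≠ .base ι hR, p x = 0)
    {a b : Module.End K (LinExt R n → K)} (ha : a ∈ integralHecke v R n q u)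
    (hb : b ∈ integralHecke v R n q u) :
    v (p (.base ι hR) * seminormalForm R n q u (a (Pi.single (.base ι hR) 1))
      (b (Pi.single (.base ι hR) 1))) ≤ 1 := by
  obtain ⟨a', ha', hadj⟩ := exists_isAdjointPair_integralHecke ha
  have hbase : gramWeight q u (LinExt.base ι hR).1 = 1 := by
    have : inversions (LinExt.base ι hR).1 = ∅ := by
      ext z
      simpa [inversions, LinExt.base] using fun h => h.le
    rw [gramWeight, this, Finset.prod_empty]
  rw [hadj, seminormalForm_apply, Finset.sum_eq_single (.base ι hR) (fun x _ hx => by simp [hx])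
    (by simp), hbase, Pi.single_eq_same, one_mul, one_mul, ← Module.End.mul_apply]
  exact valuation_apply_single_le_one hu hq hint hp hp₀ (mul_mem ha' hb)

/-- Cutting the triangular basis down to `Y` by `g` gives integral vectors whose Gram determinant
is, up to a unit, the product of the weights. -/
theorem valuation_prod_gramWeight_le_one [MulArchimedean Γ] (hu : IsSeminormalContent R n q u)
    (hq : v q ≤ 1) (hint : ∀ A, v (u A) ≤ 1) {ι : P ≃o Fin n} {hR : ∀ A B, R A B → A < B}
    {p : LinExt R n → K} (hp : p ∈ contentRing v R n u) (hp₀ : ∀ x ≠ .base ι hR, p x = 0)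
    {g : LinExt R n → K} (hg : g ∈ contentRing v R n u) (Y : Finset (LinExt R n))
    (hg₁ : ∀ x ∈ Y, v (g x) = 1) (hg₀ : ∀ x ∉ Y, g x = 0) :
    v (∏ x ∈ Y, p (.base ι hR) * gramWeight q u x.1) ≤ 1 := by
  set x₀ := LinExt.base ι hR
  choose a ha hone hzero using exists_triangular (v := v) (q := q) (u := u) ι hR
  let b (s : LinExt R n) : LinExt R n → K := (Algebra.lmul K _ g * a s) (Pi.single x₀ 1)
  have hb (s x : LinExt R n) : b s x = g x * a s (Pi.single x₀ 1) x := rfl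
  let M : Matrix Y Y K := .of fun s x => b s x
  have hM : v M.det = 1 := by
    rw [det_eq_prod_diag M (fun s => (inversions s.1.1).card) fun s t hst hle => by
      simp [M, hb, x₀, hzero s t (Subtype.coe_ne_coe.mpr hst.symm) hle], map_prod]
    exact Finset.prod_eq_one fun s _ => by simp [M, hb, x₀, hone, hg₁ s s.2]
  have hG : M * Matrix.diagonal (fun x : Y => p x₀ * gramWeight q u x.1.1) * M.transpose =
      .of fun s t : Y => p x₀ * seminormalForm R n q u (b s) (b t) := by
    ext s t
    rw [Matrix.of_apply, seminormalForm_apply, ← Finset.sum_subset Y.subset_univ fun x _ hx => by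
      rw [hb, hg₀ x hx]; ring, ← Finset.sum_coe_sort, Finset.mul_sum, Matrix.mul_apply]
    exact Finset.sum_congr rfl fun x _ => by
      simp only [M, Matrix.mul_diagonal, Matrix.transpose_apply, Matrix.of_apply]; ring
  have hdet := valuation_det_le_one fun s t : Y => by
    have hga (s : Y) := mul_mem (lmul_mem_integralHecke hg) (ha s)
    exact (congrArg v (congrFun₂ hG s t)).trans_le
      (valuation_mul_seminormalForm_le_one hu hq hint hp hp₀ (hga s) (hga t))
  rwa [Matrix.det_mul, Matrix.det_mul, Matrix.det_transpose, Matrix.det_diagonal, map_mul, map_mul,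
    hM, one_mul, mul_one, Finset.prod_coe_sort Y fun x => p x₀ * gramWeight q u x.1] at hdet

end Gram

/-! ### Quantum parameters -/

section QuantumParameter

open Polynomial IsDedekindDomain WithZero

/-- A parameter of a Hecke algebra of quantum characteristic `e`, seen as the reduction of a generic
one: modulo the maximal ideal of `v` the unit `q` is a primitive `e`-th root of unity (or `1`, in
characteristic `e`), and `q ^ d - 1` is a uniformizer whenever it is not a unit. -/
structure IsQuantumParameter {K : Type*} [Field K] (v : Valuation K ℤᵐ⁰) (q : K) (e : ℕ) :
    Prop where
  valuation_eq_one : v q = 1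
  valuation_zpow_sub_one : ∀ d : ℤ, d ≠ 0 → v (q ^ d - 1) = if (e : ℤ) ∣ d then exp (-1) else 1

variable {F : Type*} [Field F]

/-- The place of the rational function field at the point `a` of the affine line. -/
noncomputable def placeAt (a : F) : HeightOneSpectrum F[X] where
  asIdeal := Ideal.span {X - C a}
  isPrime := (Ideal.span_singleton_prime (X_sub_C_ne_zero a)).mpr (prime_X_sub_C a)
  ne_bot := by simpa [Ideal.span_singleton_eq_bot] using X_sub_C_ne_zero a

variable {a : F} {f : F[X]}

theorem valuation_placeAt_of_eval_ne_zero (h : f.eval a ≠ 0) :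
    (placeAt a).valuation (RatFunc F) (algebraMap _ _ f) = 1 := by
  rw [HeightOneSpectrum.valuation_of_algebraMap, HeightOneSpectrum.intValuation_eq_one_iff,
    placeAt, Ideal.mem_span_singleton, dvd_iff_isRoot]
  exact h

theorem valuation_placeAt_of_simple_root (h : f.eval a = 0) (h' : f.derivative.eval a ≠ 0) :
    (placeAt a).valuation (RatFunc F) (algebraMap _ _ f) = exp (-1) := by
  obtain ⟨g, rfl⟩ := dvd_iff_isRoot.mpr h
  have hg : g.eval a ≠ 0 := by simpa using h'
  rw [map_mul, map_mul, valuation_placeAt_of_eval_ne_zero hg, mul_one,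
    HeightOneSpectrum.valuation_of_algebraMap]
  exact HeightOneSpectrum.intValuation_singleton _ (X_sub_C_ne_zero a) rfl

theorem valuation_placeAt_X_pow_sub_one [CharZero F] {e : ℕ} (ha : IsPrimitiveRoot a e) (he : e ≠ 0)
    {d : ℕ} (hd : d ≠ 0) : (placeAt a).valuation (RatFunc F) (algebraMap F[X] _ X ^ d - 1) =
      if e ∣ d then exp (-1) else 1 := by
  have heval : (X ^ d - 1 : F[X]).eval a = a ^ d - 1 := by simp
  have hmap : algebraMap F[X] (RatFunc F) X ^ d - 1 = algebraMap _ _ (X ^ d - 1 : F[X]) := by simp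
  rw [hmap]
  split_ifs with h
  · refine valuation_placeAt_of_simple_root ?_ ?_
    · rw [heval, (ha.pow_eq_one_iff_dvd d).mpr h, sub_self]
    · simp [derivative_X_pow, hd, ha.ne_zero he]
  · refine valuation_placeAt_of_eval_ne_zero ?_
    rwa [heval, sub_ne_zero, Ne, ha.pow_eq_one_iff_dvd]

theorem isQuantumParameter_placeAt [CharZero F] {e : ℕ} (ha : IsPrimitiveRoot a e) (he : e ≠ 0) :
    IsQuantumParameter ((placeAt a).valuation (RatFunc F)) (algebraMap F[X] _ X) e := by
  have hX : (placeAt a).valuation (RatFunc F) (algebraMap F[X] _ X) = 1 :=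
    valuation_placeAt_of_eval_ne_zero (by simpa using ha.ne_zero he)
  refine ⟨hX, fun d hd => ?_⟩
  obtain ⟨m, rfl | rfl⟩ := d.eq_nat_or_neg
  · simpa [Int.natCast_dvd_natCast] using
      valuation_placeAt_X_pow_sub_one ha he (Int.natCast_ne_zero.mp hd)
  · have hinv : (algebraMap F[X] (RatFunc F) X ^ m)⁻¹ - 1 =
        -((algebraMap F[X] _ X ^ m)⁻¹ * (algebraMap F[X] _ X ^ m - 1)) := by
      have : algebraMap F[X] (RatFunc F) X ^ m ≠ 0 := pow_ne_zero _ (by simp [RatFunc.X_ne_zero])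
      rw [mul_sub, inv_mul_cancel₀ this]
      ring
    rw [zpow_neg, zpow_natCast, hinv, Valuation.map_neg, map_mul, map_inv₀, map_pow, hX, one_pow,
      inv_one, one_mul, valuation_placeAt_X_pow_sub_one ha he (by simpa using hd)]
    simp only [Int.dvd_neg, Int.natCast_dvd_natCast]

end QuantumParameter

/-! ### The degree of a node -/

section CartanWeight

variable {I : Type*} [CommRing I]

/-- The indicator of `0` in a ring `I` of residues: `zeroIndicator (i - j)` is the Kronecker delta
of the residues `i` and `j`. -/
noncomputable def zeroIndicator (z : I) : ℤ := if z = 0 then 1 else 0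

theorem zeroIndicator_neg (z : I) : zeroIndicator (-z) = zeroIndicator z := by
  simp only [zeroIndicator, neg_eq_zero]

/-- The negative of the Cartan pairing `(α_i, α_j)` of the quiver with vertices `I` and arrows
`i → i + 1`, as a function of `z = i - j`. -/
noncomputable def cartanWeight (z : I) : ℤ :=
  zeroIndicator (z - 1) + zeroIndicator (z + 1) - 2 * zeroIndicator z

/-- The number (`0` or `1`) of addable nodes of residue `0` in row `r` of a partition with row
lengths `L` whose first node has residue `a`. -/
noncomputable def rowAddable (a : I) (L : ℕ → ℕ) (r : ℕ) : ℤ :=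
  if r = 0 ∨ L r < L (r - 1) then zeroIndicator (a - r + L r) else 0

/-- The number (`0` or `1`) of removable nodes of residue `0` in row `r` of a partition with row
lengths `L` whose first node has residue `a`. -/
noncomputable def rowRemovable (a : I) (L : ℕ → ℕ) (r : ℕ) : ℤ :=
  if L (r + 1) < L r then zeroIndicator (a - r + L r - 1) else 0

/-- The total weight of the nodes in row `r` of a partition with row lengths `L` whose first node
has residue `a`. -/
noncomputable def rowWeight (a : I) (L : ℕ → ℕ) (r : ℕ) : ℤ :=
  ∑ c ∈ Finset.range (L r), cartanWeight (a - r + c)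

theorem sum_range_cartanWeight (a : I) (m : ℕ) :
    ∑ c ∈ Finset.range m, cartanWeight (a + c) =
      (zeroIndicator (a + m) - zeroIndicator (a + m - 1)) -
        (zeroIndicator a - zeroIndicator (a - 1)) := by
  let f (c : ℕ) : ℤ := zeroIndicator (a + c) - zeroIndicator (a + c - 1)
  have hf (c : ℕ) : cartanWeight (a + c) = f (c + 1) - f c := by
    simp only [f, cartanWeight, Nat.cast_add, Nat.cast_one, ← add_assoc, add_sub_cancel_right]
    ring
  rw [Finset.sum_congr rfl fun c _ => hf c, Finset.sum_range_sub]
  simp only [f, Nat.cast_zero, add_zero]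

theorem rowAddable_succ_sub_rowRemovable (a : I) {L : ℕ → ℕ} (hL : Antitone L) (r : ℕ) :
    rowAddable a L (r + 1) - rowRemovable a L r =
      zeroIndicator (a - (r + 1 : ℕ) + L (r + 1)) - zeroIndicator (a - r + L r - 1) := by
  rcases (hL r.le_succ).lt_or_eq with h | h
  · simp [rowAddable, rowRemovable, h]
  · have : a - ((r + 1 : ℕ) : I) + L r = a - r + L r - 1 := by push_cast; ring
    rw [rowAddable, rowRemovable, if_neg (by simp [h]), if_neg h.not_lt, h, this, sub_self,
      sub_self]

/-- With `f r = [a - r + L r = 0] - [a - r = 0]`, the addable node of row `r + 1`, the removable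
node of row `r` and the weight of row `r` combine to `f (r + 1) - f r`, so the sum telescopes. -/
theorem sum_rowAddable_sub_rowRemovable_sub_rowWeight (a : I) {L : ℕ → ℕ} (hL : Antitone L)
    {s : ℕ} (hs : s = 0 ∨ L s < L (s - 1)) {N : ℕ} (hsN : s ≤ N) (hN : L N = 0) :
    ∑ r ∈ Finset.Ico s (N + 1), (rowAddable a L r - rowRemovable a L r - rowWeight a L r) =
      zeroIndicator (a - s) := by
  let f (r : ℕ) : ℤ := zeroIndicator (a - r + L r) - zeroIndicator (a - r)
  have hf (r : ℕ) : rowAddable a L (r + 1) - rowRemovable a L r - rowWeight a L r =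
      f (r + 1) - f r := by
    have h : a - r - 1 = a - ((r + 1 : ℕ) : I) := by push_cast; ring
    rw [rowAddable_succ_sub_rowRemovable a hL, rowWeight, sum_range_cartanWeight, h]
    ring
  have htel : ∑ r ∈ Finset.Ico s N, (rowAddable a L (r + 1) - rowRemovable a L r -
      rowWeight a L r) = f N - f s := by
    rw [Finset.sum_congr rfl fun r _ => hf r, Finset.sum_Ico_sub f hsN]
  have hfs : f s = rowAddable a L s - zeroIndicator (a - s) := by simp [f, rowAddable, hs]
  have hfN : f N = 0 := by simp [f, hN]
  have hrem : rowRemovable a L N = 0 := by simp [rowRemovable, hN]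
  have hrow : rowWeight a L N = 0 := by simp [rowWeight, hN]
  have hadd : ∑ r ∈ Finset.Ico s (N + 1), rowAddable a L r =
      rowAddable a L s + ∑ r ∈ Finset.Ico s N, rowAddable a L (r + 1) := by
    rw [Finset.sum_eq_sum_Ico_succ_bot (by omega), ← Finset.sum_Ico_add' _ s N 1]
  simp only [Finset.sum_sub_distrib] at htel ⊢
  rw [hadd, Finset.sum_Ico_succ_top hsN, Finset.sum_Ico_succ_top hsN, hrem, hrow]
  linarith

end CartanWeight

/-- The length of row `r` of component `l` of a diagram. -/
noncomputable def rowLength (S : Set Node) (l r : ℕ) : ℕ := sInf {c | (l, r, c) ∉ S}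

namespace IsDiagramSet

variable {ℓ : ℕ} {S : Set Node}

theorem mem_iff_lt_rowLength (hS : IsDiagramSet ℓ S) {l r c : ℕ} :
    (l, r, c) ∈ S ↔ c < rowLength S l r := by
  have hne : {c | (l, r, c) ∉ S}.Nonempty := by
    by_contra! h
    refine Set.infinite_of_injective_forall_mem (f := fun c : ℕ => ((l, r, c) : Node))
      (fun a b hab => by simpa using hab) (fun c => ?_) hS.1
    by_contra hc
    exact Set.notMem_empty c (h ▸ hc)
  refine ⟨fun h => ?_, fun h => not_not.mp (Nat.notMem_of_lt_sInf h)⟩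
  by_contra! hle
  exact Nat.sInf_mem hne (Nat.decreasingInduction (motive := fun m _ => (l, r, m) ∈ S)
    (fun m _ => hS.2.2.1 l r m) h hle)

theorem antitone_rowLength (hS : IsDiagramSet ℓ S) (l : ℕ) : Antitone (rowLength S l) := by
  refine antitone_nat_of_succ_le fun r => ?_
  by_contra! h
  exact lt_irrefl _ (hS.mem_iff_lt_rowLength.mp (hS.2.2.2 l r _ (hS.mem_iff_lt_rowLength.mpr h)))

theorem exists_rowLength_eq_zero (hS : IsDiagramSet ℓ S) :
    ∃ N, ∀ l r, N ≤ r → rowLength S l r = 0 := by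
  obtain ⟨N, hN⟩ := (hS.1.image fun A : Node => A.2.1).bddAbove
  refine ⟨N + 1, fun l r h => ?_⟩
  by_contra h'
  have : r ≤ N := hN ⟨_, hS.mem_iff_lt_rowLength.mpr (Nat.pos_of_ne_zero h'), rfl⟩
  omega

theorem addable_iff (hS : IsDiagramSet ℓ S) {l r c : ℕ} : Addable ℓ S (l, r, c) ↔
    l < ℓ ∧ c = rowLength S l r ∧ (r = 0 ∨ rowLength S l r < rowLength S l (r - 1)) := by
  have hmem {l r c : ℕ} := hS.mem_iff_lt_rowLength (l := l) (r := r) (c := c)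
  obtain ⟨hfin, hcomp, -, hcol⟩ := hS
  simp only [Addable, IsDiagramSet, Set.union_singleton, Set.mem_insert_iff, Prod.mk.injEq, hmem,
    Set.finite_insert, hfin, true_and]
  constructor
  · rintro ⟨hnot, hcomp', hrow', hcol'⟩
    have hc : c ≤ rowLength S l r := by
      rcases c with _ | c
      · exact Nat.zero_le _
      · simpa using hrow' l r c (.inl ⟨rfl, rfl, rfl⟩)
    obtain rfl : c = rowLength S l r := by omega
    refine ⟨hcomp' _ (.inl rfl), rfl, ?_⟩
    rcases r with _ | r
    · exact .inl rfl
    · simpa using hcol' l r _ (.inl ⟨rfl, rfl, rfl⟩)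
  · rintro ⟨hl, rfl, hr⟩
    refine ⟨lt_irrefl _, ?_, ?_, ?_⟩
    · rintro A (rfl | hA)
      exacts [hl, hcomp A (hmem.mpr hA)]
    · rintro l' r' c' (⟨rfl, rfl, h⟩ | h) <;> omega
    · rintro l' r' c' (⟨rfl, rfl, rfl⟩ | h)
      · exact .inr (by simpa using hr)
      · exact .inr (hmem.mp (hcol _ _ _ (hmem.mpr h)))

theorem removable_iff (hS : IsDiagramSet ℓ S) {l r c : ℕ} : Removable ℓ S (l, r, c) ↔
    c + 1 = rowLength S l r ∧ rowLength S l (r + 1) < rowLength S l r := by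
  have hmem {l r c : ℕ} := hS.mem_iff_lt_rowLength (l := l) (r := r) (c := c)
  obtain ⟨hfin, hcomp, -, hcol⟩ := hS
  simp only [Removable, IsDiagramSet, Set.mem_sdiff, Set.mem_singleton_iff, Prod.mk.injEq, hmem,
    hfin.sdiff, true_and]
  constructor
  · rintro ⟨hc, -, hrow', hcol'⟩
    have hc' : c + 1 = rowLength S l r := by
      by_contra h
      exact (hrow' l r c ⟨by omega, by simp⟩).2 ⟨rfl, rfl, rfl⟩
    refine ⟨hc', ?_⟩
    by_contra h
    exact (hcol' l r c ⟨by omega, by simp⟩).2 ⟨rfl, rfl, rfl⟩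
  · rintro ⟨hc, hr⟩
    refine ⟨by omega, fun A hA => hcomp A (hmem.mpr hA.1), ?_, ?_⟩
    · rintro l' r' c' ⟨h, -⟩
      refine ⟨by omega, ?_⟩
      rintro ⟨rfl, rfl, rfl⟩
      omega
    · rintro l' r' c' ⟨h, -⟩
      refine ⟨hmem.mp (hcol _ _ _ (hmem.mpr h)), ?_⟩
      rintro ⟨rfl, rfl, rfl⟩
      omega

end IsDiagramSet

section DegreeOfNode

variable {ℓ e : ℕ} {S : Set Node} {A : Node} {N : ℕ}

/-- The rows `(l, r)` with `l < ℓ` and `r ≤ N` strictly below the row of the node `A`. -/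
def rowsBelow (ℓ N : ℕ) (A : Node) : Finset (ℕ × ℕ) :=
  {A.1} ×ˢ Finset.Ico (A.2.1 + 1) (N + 1) ∪ Finset.Ioo A.1 ℓ ×ˢ Finset.range (N + 1)

theorem mem_rowsBelow {l r : ℕ} : (l, r) ∈ rowsBelow ℓ N A ↔
    r ≤ N ∧ (l = A.1 ∧ A.2.1 < r ∨ A.1 < l ∧ l < ℓ) := by
  simp only [rowsBelow, Finset.mem_union, Finset.mem_product, Finset.mem_singleton,
    Finset.mem_Ico, Finset.mem_Ioo, Finset.mem_range]
  omega

theorem sum_rowsBelow (f : ℕ × ℕ → ℤ) : ∑ w ∈ rowsBelow ℓ N A, f w =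
    ∑ r ∈ Finset.Ico (A.2.1 + 1) (N + 1), f (A.1, r) +
      ∑ l ∈ Finset.Ioo A.1 ℓ, ∑ r ∈ Finset.range (N + 1), f (l, r) := by
  rw [rowsBelow, Finset.sum_union, Finset.sum_product, Finset.sum_singleton, Finset.sum_product]
  exact Finset.disjoint_product.mpr (.inl (by simp))

theorem ncard_eq_sum_of_mem_iff (W : Finset (ℕ × ℕ)) {T : Set Node} {f : ℕ → ℕ → ℕ}
    {Q : ℕ → ℕ → Prop} (h : ∀ l r c, (l, r, c) ∈ T ↔ (l, r) ∈ W ∧ c = f l r ∧ Q l r) :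
    (T.ncard : ℤ) = ∑ w ∈ W, if Q w.1 w.2 then 1 else 0 := by
  let g (w : ℕ × ℕ) : Node := (w.1, w.2, f w.1 w.2)
  have hg : Function.Injective g := by
    rintro ⟨l, r⟩ ⟨l', r'⟩ h
    simp_all [g]
  have hT : T = ({w ∈ W | Q w.1 w.2}.image g : Finset Node) := by
    ext ⟨l, r, c⟩
    simp only [h, g, Finset.coe_image, Finset.coe_filter, Set.mem_image, Set.mem_ofPred_eq,
      Prod.exists, Prod.mk.injEq]
    grind
  rw [hT, Set.ncard_coe_finset, Finset.card_image_of_injective _ hg, Finset.card_filter]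
  push_cast
  rfl

theorem resNode_eq_iff (κ : ℕ → ℤ) {l r c : ℕ} {i : ZMod e} :
    resNode e κ (l, r, c) = i ↔ κ l - i - r + c = 0 := by
  rw [← sub_eq_zero, resNode]
  push_cast
  ring_nf

theorem ncard_addable_nodeBelow (he : 2 ≤ e) (κ : ℕ → ℤ) (hS : IsDiagramSet ℓ S)
    (hA : Removable ℓ S A) (hN : ∀ l r, N ≤ r → rowLength S l r = 0) :
    (Set.ncard {B | Addable ℓ S B ∧ resNode e κ B = resNode e κ A ∧ nodeBelow A B} : ℤ) =
      ∑ w ∈ rowsBelow ℓ N A, rowAddable (κ w.1 - resNode e κ A) (rowLength S w.1) w.2 := by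
  have : Fact (1 < e) := ⟨he⟩
  obtain ⟨l₀, r₀, c₀⟩ := A
  have hl₀ : l₀ < ℓ := hS.2.1 _ hA.1
  have hres₀ : resNode e κ (l₀, r₀, rowLength S l₀ r₀) ≠ resNode e κ (l₀, r₀, c₀) := by
    rw [← (hS.removable_iff.mp hA).1]
    simp [resNode, add_sub_right_comm, ← add_assoc]
  rw [ncard_eq_sum_of_mem_iff (rowsBelow ℓ N (l₀, r₀, c₀)) (f := rowLength S)
    (Q := fun l r => (r = 0 ∨ rowLength S l r < rowLength S l (r - 1)) ∧
      (κ l - resNode e κ (l₀, r₀, c₀) : ZMod e) - r + rowLength S l r = 0)]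
  · simp only [rowAddable, zeroIndicator, ← ite_and]
    congr!
  intro l r c
  simp only [Set.mem_ofPred_eq, hS.addable_iff, mem_rowsBelow, nodeBelow, ← resNode_eq_iff]
  constructor
  · rintro ⟨⟨hl, rfl, hadd⟩, hres, hbelow⟩
    have hrN : r ≤ N := by
      by_contra! h
      rw [hN l r (by omega), hN l (r - 1) (by omega)] at hadd
      omega
    refine ⟨⟨hrN, ?_⟩, rfl, hadd, hres⟩
    rcases hbelow with h | ⟨rfl, h | ⟨rfl, -⟩⟩
    exacts [.inr ⟨h, hl⟩, .inl ⟨rfl, h⟩, absurd hres hres₀]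
  · rintro ⟨⟨-, hrow⟩, rfl, hadd, hres⟩
    exact ⟨⟨by omega, rfl, hadd⟩, hres, by omega⟩

theorem IsDiagramSet.mem_rowsBelow_iff_nodeBelow (hS : IsDiagramSet ℓ S) (hA : Removable ℓ S A)
    (hN : ∀ l r, N ≤ r → rowLength S l r = 0) {l r c : ℕ} (h : (l, r, c) ∈ S) :
    (l, r) ∈ rowsBelow ℓ N A ↔ nodeBelow A (l, r, c) := by
  obtain ⟨l₀, r₀, c₀⟩ := A
  have hl : l < ℓ := hS.2.1 _ h
  have hc := hS.mem_iff_lt_rowLength.mp h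
  obtain ⟨hc₀, -⟩ := hS.removable_iff.mp hA
  have hrN : r ≤ N := by
    by_contra! hr
    rw [hN l r hr.le] at hc
    exact Nat.not_lt_zero _ hc
  simp only [mem_rowsBelow, nodeBelow]
  constructor
  · omega
  · rintro (h | ⟨rfl, h | ⟨rfl, h⟩⟩) <;> omega

theorem ncard_removable_nodeBelow (κ : ℕ → ℤ) (hS : IsDiagramSet ℓ S)
    (hA : Removable ℓ S A) (hN : ∀ l r, N ≤ r → rowLength S l r = 0) :
    (Set.ncard {B | Removable ℓ S B ∧ resNode e κ B = resNode e κ A ∧ nodeBelow A B} : ℤ) =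
      ∑ w ∈ rowsBelow ℓ N A, rowRemovable (κ w.1 - resNode e κ A) (rowLength S w.1) w.2 := by
  rw [ncard_eq_sum_of_mem_iff (rowsBelow ℓ N A) (f := fun l r => rowLength S l r - 1)
    (Q := fun l r => rowLength S l (r + 1) < rowLength S l r ∧
      (κ l - resNode e κ A : ZMod e) - r + rowLength S l r - 1 = 0)]
  · simp only [rowRemovable, zeroIndicator, ← ite_and]
    congr!
  intro l r c
  have hres (hc : c + 1 = rowLength S l r) : resNode e κ (l, r, c) = resNode e κ A ↔
      (κ l - resNode e κ A : ZMod e) - r + rowLength S l r - 1 = 0 := by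
    rw [resNode_eq_iff, ← hc, Nat.cast_add, Nat.cast_one, ← add_assoc, add_sub_cancel_right]
  constructor
  · rintro ⟨hB, hBA, hbelow⟩
    obtain ⟨hc, hr⟩ := hS.removable_iff.mp hB
    exact ⟨(hS.mem_rowsBelow_iff_nodeBelow hA hN hB.1).mpr hbelow, by omega, hr, (hres hc).mp hBA⟩
  · rintro ⟨hrow, rfl, hr, hBA⟩
    have hc : rowLength S l r - 1 + 1 = rowLength S l r := by omega
    have hB := hS.removable_iff.mpr ⟨hc, hr⟩
    exact ⟨hB, (hres hc).mpr hBA, (hS.mem_rowsBelow_iff_nodeBelow hA hN hB.1).mp hrow⟩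

theorem sum_cartanWeight_nodeBelow (κ : ℕ → ℤ) (hS : IsDiagramSet ℓ S)
    (hA : Removable ℓ S A) (hN : ∀ l r, N ≤ r → rowLength S l r = 0) :
    ∑ B ∈ hS.1.toFinset with nodeBelow A B, cartanWeight (resNode e κ B - resNode e κ A) =
      ∑ w ∈ rowsBelow ℓ N A, rowWeight (κ w.1 - resNode e κ A) (rowLength S w.1) w.2 := by
  simp only [rowWeight]
  rw [Finset.sum_sigma']
  refine Finset.sum_bij' (fun B _ => ⟨(B.1, B.2.1), B.2.2⟩) (fun w _ => (w.1.1, w.1.2, w.2))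
    ?_ ?_ (fun _ _ => rfl) (fun _ _ => rfl) ?_
  · rintro ⟨l, r, c⟩ hB
    simp only [Finset.mem_filter, Set.Finite.mem_toFinset] at hB
    simp only [Finset.mem_sigma, Finset.mem_range, hS.mem_rowsBelow_iff_nodeBelow hA hN hB.1,
      ← hS.mem_iff_lt_rowLength, hB, and_self]
  · rintro ⟨⟨l, r⟩, c⟩ hB
    simp only [Finset.mem_sigma, Finset.mem_range, ← hS.mem_iff_lt_rowLength] at hB
    simp only [Finset.mem_filter, Set.Finite.mem_toFinset,
      ← hS.mem_rowsBelow_iff_nodeBelow hA hN hB.2, hB, and_self]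
  · rintro ⟨l, r, c⟩ -
    simp only [resNode]
    push_cast
    ring_nf

/-- The contribution of the charge to the degree of adding the node `A`. Below `A` there are the
components `l > A.1` and the rest of the component of `A`, which starts in the row after `A`; each
of these contributes `1` if its first node has the residue of `A`. -/
noncomputable def chargeDegree (ℓ e : ℕ) (κ : ℕ → ℤ) (A : Node) : ℤ :=
  zeroIndicator (κ A.1 - resNode e κ A - (A.2.1 + 1 : ℕ)) +
    ∑ l ∈ Finset.Ioo A.1 ℓ, zeroIndicator (κ l - resNode e κ A)

theorem dNode_eq_chargeDegree_add (he : 2 ≤ e) (κ : ℕ → ℤ) (hS : IsDiagramSet ℓ S)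
    (hA : Removable ℓ S A) : dNode ℓ e κ S A = chargeDegree ℓ e κ A +
      ∑ B ∈ hS.1.toFinset with nodeBelow A B, cartanWeight (resNode e κ B - resNode e κ A) := by
  obtain ⟨N, hN⟩ := hS.exists_rowLength_eq_zero
  let a (l : ℕ) : ZMod e := κ l - resNode e κ A
  let L := rowLength S
  obtain ⟨hA₁, hA₂⟩ := hS.removable_iff.mp hA
  have hrow : A.2.1 + 1 ≤ N := by
    by_contra! h
    have h₀ := hN A.1 A.2.1 (by omega)
    exact absurd (hA₁.trans h₀) (Nat.succ_ne_zero _)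
  have hsame := sum_rowAddable_sub_rowRemovable_sub_rowWeight (a A.1) (hS.antitone_rowLength A.1)
    (.inr hA₂) hrow (hN _ N le_rfl)
  have hbelow (l : ℕ) : ∑ r ∈ Finset.range (N + 1),
      (rowAddable (a l) (L l) r - rowRemovable (a l) (L l) r - rowWeight (a l) (L l) r) =
        zeroIndicator (a l) := by
    simpa using sum_rowAddable_sub_rowRemovable_sub_rowWeight (a l) (hS.antitone_rowLength l)
      (.inl rfl) N.zero_le (hN l N le_rfl)
  have hcharge : ∑ w ∈ rowsBelow ℓ N A, (rowAddable (a w.1) (L w.1) w.2 -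
      rowRemovable (a w.1) (L w.1) w.2 - rowWeight (a w.1) (L w.1) w.2) =
        chargeDegree ℓ e κ A := by
    rw [sum_rowsBelow, chargeDegree, Finset.sum_congr rfl fun l _ => hbelow l, hsame]
  simp only [Finset.sum_sub_distrib] at hcharge
  rw [dNode, ncard_addable_nodeBelow he κ hS hA hN, ncard_removable_nodeBelow κ hS hA hN,
    sum_cartanWeight_nodeBelow κ hS hA hN]
  linarith

end DegreeOfNode

section QuantumIntegers

open WithZero

namespace IsQuantumParameter

variable {K : Type*} [Field K] {v : Valuation K ℤᵐ⁰} {q : K} {e : ℕ}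

theorem ne_zero (h : IsQuantumParameter v q e) : q ≠ 0 :=
  v.ne_zero_iff.mp (h.valuation_eq_one ▸ one_ne_zero)

theorem valuation_zpow (h : IsQuantumParameter v q e) (a : ℤ) : v (q ^ a) = 1 := by
  rw [map_zpow₀, h.valuation_eq_one, one_zpow]

theorem valuation_zpow_sub_zpow (h : IsQuantumParameter v q e) {a b : ℤ} (hab : a ≠ b) :
    v (q ^ a - q ^ b) = exp (-zeroIndicator ((a : ZMod e) - b)) := by
  have hfactor : q ^ a - q ^ b = q ^ b * (q ^ (a - b) - 1) := by
    rw [mul_sub, ← zpow_add₀ h.ne_zero, add_sub_cancel, mul_one]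
  rw [hfactor, map_mul, h.valuation_zpow, one_mul, h.valuation_zpow_sub_one _ (sub_ne_zero.mpr hab)]
  simp only [zeroIndicator, ← Int.cast_sub, ZMod.intCast_zmod_eq_zero_iff_dvd]
  split_ifs <;> simp

theorem zpow_injective (h : IsQuantumParameter v q e) : Function.Injective fun a : ℤ => q ^ a := by
  intro a b hab
  by_contra hne
  have hv := h.valuation_zpow_sub_zpow hne
  rw [sub_eq_zero.mpr hab, map_zero] at hv
  exact exp_ne_zero hv.symm

theorem normFactor_zpow_eq_zero (h : IsQuantumParameter v q e) {a b : ℤ}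
    (hab : a = b + 1 ∨ b = a + 1) : normFactor q (q ^ a) (q ^ b) = 0 := by
  rcases hab with rfl | rfl <;> simp [normFactor, zpow_add_one₀ h.ne_zero, mul_comm q]

theorem valuation_normFactor_zpow (h : IsQuantumParameter v q e) {a b : ℤ} (hab : b + 2 ≤ a) :
    v (normFactor q (q ^ a) (q ^ b)) = exp (-cartanWeight ((b : ZMod e) - a)) := by
  have h₁ : ((1 + b : ℤ) : ZMod e) - a = b - a + 1 := by push_cast; ring
  have h₂ : (b : ZMod e) - ((1 + a : ℤ) : ZMod e) = b - a - 1 := by push_cast; ring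
  rw [normFactor, map_div₀, map_mul, map_pow, ← zpow_one_add₀ h.ne_zero, ← zpow_one_add₀ h.ne_zero,
    h.valuation_zpow_sub_zpow (by omega), h.valuation_zpow_sub_zpow (by omega),
    h.valuation_zpow_sub_zpow (by omega), ← exp_add, ← exp_nsmul, ← exp_sub, h₁, h₂, cartanWeight,
    nsmul_eq_mul]
  congr 1
  push_cast
  ring

end IsQuantumParameter

theorem prod_exp_neg {ι : Type*} (s : Finset ι) (f : ι → ℤ) :
    ∏ i ∈ s, (exp (-f i) : ℤᵐ⁰) = exp (-∑ i ∈ s, f i) := by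
  induction s using Finset.induction_on with
  | empty => simp
  | insert i s hi ih =>
    rw [Finset.prod_insert hi, Finset.sum_insert hi, ih, ← exp_add, neg_add]

end QuantumIntegers

namespace LinExt

variable {P : Type*} {R : P → P → Prop} {n : ℕ}

/-- Take for `k` the first position where `x` departs from the base extension. -/
theorem exists_departure [LinearOrder P] {ι : P ≃o Fin n} {hR : ∀ A B, R A B → A < B}
    {x : LinExt R n} (hx : x ≠ base ι hR) :
    ∃ k, ι.symm k < x.1.symm k ∧ ∀ C, R C (x.1.symm k) → C < ι.symm k := by
  have hne : ∃ k, x.1.symm k ≠ ι.symm k := by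
    by_contra! h
    refine hx (Subtype.ext (Equiv.symm_bijective.injective (Equiv.ext h)))
  obtain ⟨k, hk, hmin⟩ := WellFounded.has_min wellFounded_lt {k | x.1.symm k ≠ ι.symm k} hne
  replace hmin (j) (hj : j < k) : x.1.symm j = ι.symm j := not_not.mp fun h => hmin j h hj
  refine ⟨k, lt_of_le_of_ne (not_lt.mp fun hlt => ?_) (Ne.symm hk), fun C hC => ?_⟩
  · have hj := hmin (ι (x.1.symm k)) (by rwa [← ι.lt_symm_apply])
    rw [ι.symm_apply_apply, x.1.symm.injective.eq_iff] at hj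
    exact hk (ι.eq_symm_apply.mpr hj)
  · have hj := hmin (x.1 C) (by simpa using x.2 _ _ hC)
    rw [Equiv.symm_apply_apply] at hj
    rw [hj]
    exact ι.symm.strictMono (by simpa using x.2 _ _ hC)

end LinExt

section ResidueClasses

variable {P : Type*} {R : P → P → Prop} {n : ℕ} {K Γ : Type*} [Field K]
  [LinearOrderedCommGroupWithZero Γ] {v : Valuation K Γ} {u : P → K}

theorem exists_mem_contentRing_of_residue [Finite P] {I : Type*} (hint : ∀ A, v (u A) ≤ 1)
    {res : P → I} (hres : ∀ A B, res A ≠ res B → v (u A - u B) = 1) (i : Fin n → I) :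
    ∃ g ∈ contentRing v R n u, (∀ x, (∀ k, res (x.1.symm k) = i k) → v (g x) = 1) ∧
      ∀ x, ¬ (∀ k, res (x.1.symm k) = i k) → g x = 0 := by
  have := Fintype.ofFinite P
  let g : LinExt R n → K := ∏ k, ∏ A with res A ≠ i k, ((fun x => u (x.1.symm k)) - fun _ => u A)
  have hg (x) : g x = ∏ k, ∏ A with res A ≠ i k, (u (x.1.symm k) - u A) := by
    simp only [g, Finset.prod_apply, Pi.sub_apply]
  refine ⟨g, prod_mem fun k _ => prod_mem fun A _ =>
    sub_mem (content_mem_contentRing k) (const_mem_contentRing (hint A)), fun x hx => ?_,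
    fun x hx => ?_⟩
  · rw [hg, map_prod]
    refine Finset.prod_eq_one fun k _ => ?_
    rw [map_prod]
    refine Finset.prod_eq_one fun A hA => hres _ _ ?_
    rw [hx k]
    exact Ne.symm (Finset.mem_filter.mp hA).2
  · push Not at hx
    obtain ⟨k, hk⟩ := hx
    rw [hg]
    refine Finset.prod_eq_zero (Finset.mem_univ k)
      (Finset.prod_eq_zero (Finset.mem_filter.mpr ⟨Finset.mem_univ (x.1.symm k), hk⟩) (sub_self _))

end ResidueClasses

/-! ### Nodes of a multipartition -/

namespace Multipartition

open Finset

variable {ℓ n : ℕ} {μ : Multipartition ℓ n}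

theorem mem_diagram_of_le {l r c r' c' : ℕ} (h : (l, r, c) ∈ μ.diagram) (hr : r' ≤ r)
    (hc : c' ≤ c) : (l, r', c') ∈ μ.diagram :=
  (hc.trans_lt h).trans_le (μ.antitone l hr)

theorem lt_of_mem_diagram {l r c : ℕ} (h : (l, r, c) ∈ μ.diagram) : l < ℓ ∧ r < n ∧ c < n := by
  have hc : c < μ.part l r := h
  have hl : l < ℓ := by
    by_contra! hl
    exact absurd hc (by simp [μ.comp_bound l hl])
  have hr : r < n := by
    by_contra! hr
    exact absurd hc (by simp [μ.row_bound l r hr])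
  refine ⟨hl, hr, hc.trans_le (le_trans ?_ μ.size.le)⟩
  exact (single_le_sum (fun _ _ => Nat.zero_le _) (mem_range.mpr hr)).trans
    (single_le_sum (f := fun l => ∑ r ∈ range n, μ.part l r) (fun _ _ => Nat.zero_le _)
      (mem_range.mpr hl))

theorem part_le (l r : ℕ) : μ.part l r ≤ n := by
  by_contra! h
  exact absurd (lt_of_mem_diagram (show (l, r, n) ∈ μ.diagram from h)).2.2 (lt_irrefl n)

variable (μ) in
/-- The diagram of a multipartition as a finite set. -/
def diagramFinset : Finset Node :=
  {A ∈ range ℓ ×ˢ range n ×ˢ range n | A.2.2 < μ.part A.1 A.2.1}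

theorem mem_diagramFinset {A : Node} : A ∈ μ.diagramFinset ↔ A ∈ μ.diagram := by
  obtain ⟨l, r, c⟩ := A
  simp only [diagramFinset, mem_filter, mem_product, mem_range]
  exact ⟨And.right, fun h => ⟨lt_of_mem_diagram h, h⟩⟩

variable (μ) in
theorem card_diagramFinset : #μ.diagramFinset = n := by
  have hrow (l r : ℕ) : #{c ∈ range n | c < μ.part l r} = μ.part l r := by
    rw [← card_range (μ.part l r)]
    congr 1
    ext c
    simpa using fun h => h.trans_le (part_le l r)
  rw [diagramFinset, card_filter, sum_product]
  simp_rw [sum_product, ← card_filter, hrow, μ.size]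

variable (μ) in
/-- The nodes of a multipartition. This is a structure rather than a subtype of `Node` because it
carries the lexicographic order of nodes, not the product order. -/
@[ext]
structure DiagramNode where
  toNode : Node
  mem : toNode ∈ μ.diagram

namespace DiagramNode

/-- The lexicographic order: `A < B` means that `B` is strictly below `A`. -/
instance : LinearOrder μ.DiagramNode :=
  LinearOrder.lift' (fun A => (toLex (A.1.1, toLex A.1.2) : ℕ ×ₗ ℕ ×ₗ ℕ)) fun A B h => by
    simpa [DiagramNode.ext_iff, Prod.ext_iff] using h

variable (μ) in
/-- The nodes of a multipartition, as the elements of a finite set. -/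
def equivDiagramFinset : μ.DiagramNode ≃ μ.diagramFinset where
  toFun A := ⟨A.1, mem_diagramFinset.mpr A.2⟩
  invFun A := ⟨A.1, mem_diagramFinset.mp A.2⟩

instance : Fintype μ.DiagramNode := .ofEquiv _ (equivDiagramFinset μ).symm

theorem card : Fintype.card μ.DiagramNode = n := by
  rw [Fintype.card_congr (equivDiagramFinset μ), Fintype.card_coe, card_diagramFinset]

theorem lt_iff_nodeBelow {A B : μ.DiagramNode} : A < B ↔ nodeBelow A.1 B.1 := by
  change toLex (A.1.1, toLex A.1.2) < toLex (B.1.1, toLex B.1.2) ↔ _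
  simp [Prod.Lex.lt_iff, nodeBelow]

variable (μ) in
/-- The row-reading order of the nodes. -/
noncomputable def rowReading : μ.DiagramNode ≃o Fin n :=
  (Fintype.orderIsoFinOfCardEq _ card).symm

/-- `A` lies weakly above and weakly to the left of `B ≠ A` in the same component. The linear
extensions of this relation are the standard tableaux. -/
def NorthWest (A B : μ.DiagramNode) : Prop := A.1.1 = B.1.1 ∧ A.1.2 < B.1.2

theorem NorthWest.lt {A B : μ.DiagramNode} (h : NorthWest A B) : A < B := by
  obtain ⟨h₁, h₂⟩ := h
  rw [Prod.lt_iff] at h₂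
  simp only [lt_iff_nodeBelow, nodeBelow]
  omega

end DiagramNode

end Multipartition

section Contents

/-- The content of a node, an integral lift of its residue. -/
def nodeContent (κ : ℕ → ℤ) (A : Node) : ℤ := κ A.1 + A.2.2 - A.2.1

theorem resNode_eq_intCast_nodeContent (e : ℕ) (κ : ℕ → ℤ) (A : Node) :
    resNode e κ A = (nodeContent κ A : ZMod e) := rfl

/-- The charge `κ` is decreasing, with gaps so large that the contents of the nodes of different
components of a multipartition of `n` are never close to each other. -/
def IsSeparatedCharge (n : ℕ) (κ : ℕ → ℤ) : Prop := ∀ ⦃l m⦄, l < m → κ m + 2 * n + 4 ≤ κ l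

theorem exists_isSeparatedCharge {e : ℕ} (he : e ≠ 0) (n : ℕ) (κ : ℕ → ℤ) :
    ∃ κ', IsSeparatedCharge n κ' ∧ ∀ l, (κ' l : ZMod e) = κ l := by
  refine ⟨fun l => κ l % e - e * ((2 * n + 4) * l), fun l m hlm => ?_, fun l => by simp⟩
  have he' : (1 : ℤ) ≤ e := by omega
  have hl := Int.emod_nonneg (κ l) (by omega : (e : ℤ) ≠ 0)
  have hm := Int.emod_lt_of_pos (κ m) (by omega : (0 : ℤ) < e)
  have hlm' : (l : ℤ) + 1 ≤ m := by omega
  dsimp only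
  nlinarith [mul_le_mul_of_nonneg_left hlm' (by positivity : (0 : ℤ) ≤ e * (2 * n + 4)),
    mul_le_mul_of_nonneg_right he' (by positivity : (0 : ℤ) ≤ 2 * n + 3)]

variable {e : ℕ} {κ κ' : ℕ → ℤ} (h : ∀ l, (κ l : ZMod e) = κ' l)
include h

theorem resNode_congr (A : Node) : resNode e κ A = resNode e κ' A := by
  simp only [resNode, Int.cast_sub, Int.cast_add, h]

theorem chargeDegree_congr (ℓ : ℕ) (A : Node) : chargeDegree ℓ e κ A = chargeDegree ℓ e κ' A := by
  simp only [chargeDegree, resNode_congr h, h]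

end Contents

namespace Multipartition.DiagramNode

variable {ℓ n : ℕ} {μ : Multipartition ℓ n} {κ : ℕ → ℤ}

theorem eq_of_forall_northWest_lt {A B : μ.DiagramNode} (hAB : A < B)
    (h : ∀ C, NorthWest C B → C < A) :
    B.1 = (A.1.1, A.1.2.1 + 1, 0) ∨ A.1.1 < B.1.1 ∧ B.1.2 = (0, 0) := by
  obtain ⟨⟨l, r, c⟩, hA⟩ := A
  obtain ⟨⟨l', r', c'⟩, hB⟩ := B
  have hlt (r₁ c₁ : ℕ) (hle : (r₁, c₁) < (r', c')) : nodeBelow (l', r₁, c₁) (l, r, c) :=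
    lt_iff_nodeBelow.mp (h ⟨(l', r₁, c₁), mem_diagram_of_le hB hle.le.1 hle.le.2⟩ ⟨rfl, hle⟩)
  rw [lt_iff_nodeBelow] at hAB
  simp only [nodeBelow] at hAB hlt
  obtain rfl : c' = 0 := by
    by_contra hc
    have := hlt r' (c' - 1) (Prod.lt_iff.mpr (by dsimp only; omega))
    omega
  rcases r' with _ | r'
  · exact .inr ⟨show l < l' by omega, rfl⟩
  · have := hlt r' 0 (Prod.lt_iff.mpr (by dsimp only; omega))
    obtain ⟨rfl, rfl⟩ : l' = l ∧ r' = r := by omega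
    exact .inl rfl

theorem NorthWest.nodeContent_eq_of_covBy {A B : μ.DiagramNode} (h : NorthWest A B)
    (hcov : ∀ C, NorthWest A C → ¬ NorthWest C B) :
    nodeContent κ A.1 = nodeContent κ B.1 + 1 ∨ nodeContent κ B.1 = nodeContent κ A.1 + 1 := by
  obtain ⟨⟨l, r, c⟩, hA⟩ := A
  obtain ⟨⟨l', r', c'⟩, hB⟩ := B
  obtain ⟨rfl, hlt⟩ : l = l' ∧ (r, c) < (r', c') := h
  have hcov' (r₁ c₁ : ℕ) (h₁ : (r, c) < (r₁, c₁)) : ¬ (r₁, c₁) < (r', c') := fun h₂ =>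
    hcov ⟨(l, r₁, c₁), mem_diagram_of_le hB h₂.le.1 h₂.le.2⟩ ⟨rfl, h₁⟩ ⟨rfl, h₂⟩
  simp only [Prod.lt_iff] at hlt hcov'
  have h₁ := hcov' r (c + 1) (by omega)
  have h₂ := hcov' (r + 1) c (by omega)
  simp only [nodeContent]
  omega

theorem exists_between_of_nodeContent_eq (hκ : IsSeparatedCharge n κ) {A B : μ.DiagramNode}
    (hAB : A < B) (h : nodeContent κ A.1 = nodeContent κ B.1) :
    ∃ C D, C ≠ D ∧ NorthWest A C ∧ NorthWest C B ∧ NorthWest A D ∧ NorthWest D B := by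
  obtain ⟨⟨l, r, c⟩, hA⟩ := A
  obtain ⟨⟨l', r', c'⟩, hB⟩ := B
  have hA' := lt_of_mem_diagram hA
  have hB' := lt_of_mem_diagram hB
  rw [lt_iff_nodeBelow] at hAB
  simp only [nodeBelow, nodeContent] at hAB h
  obtain rfl : l = l' := by
    by_contra hne
    have := hκ (show l < l' by omega)
    omega
  refine ⟨⟨(l, r, c + 1), mem_diagram_of_le hB (by omega) (by omega)⟩,
    ⟨(l, r + 1, c), mem_diagram_of_le hB (by omega) (by omega)⟩, ?_, ⟨rfl, ?_⟩, ⟨rfl, ?_⟩,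
    ⟨rfl, ?_⟩, ⟨rfl, ?_⟩⟩
  · simp
  all_goals simp only [Prod.lt_iff]; omega

theorem nodeContent_add_two_le (hκ : IsSeparatedCharge n κ) {A B : μ.DiagramNode} (hAB : A < B)
    (h : ¬ NorthWest A B) : nodeContent κ B.1 + 2 ≤ nodeContent κ A.1 := by
  obtain ⟨⟨l, r, c⟩, hA⟩ := A
  obtain ⟨⟨l', r', c'⟩, hB⟩ := B
  have hA' := lt_of_mem_diagram hA
  have hB' := lt_of_mem_diagram hB
  rw [lt_iff_nodeBelow] at hAB
  replace h : ¬ (l = l' ∧ (r, c) < (r', c')) := h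
  simp only [nodeBelow, nodeContent, Prod.lt_iff] at hAB h ⊢
  obtain hl | rfl : l < l' ∨ l = l' := by omega
  · have := hκ hl
    omega
  · omega

end Multipartition.DiagramNode

section SeminormalContent

open Multipartition DiagramNode WithZero

variable {ℓ n : ℕ} {μ : Multipartition ℓ n} {κ : ℕ → ℤ} {K : Type*} [Field K]
  {v : Valuation K ℤᵐ⁰} {q : K} {e : ℕ}

theorem isSeminormalContent_zpow_nodeContent (hq : IsQuantumParameter v q e)
    (hκ : IsSeparatedCharge n κ) :
    IsSeminormalContent (NorthWest (μ := μ)) n q fun A => q ^ nodeContent κ A.1 where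
  ne x i j hij hj heq := by
    have heq := hq.zpow_injective heq
    rcases lt_trichotomy (x.1.symm i) (x.1.symm j) with h | h | h
    · obtain ⟨C, D, hne, hAC, hCB, hAD, hDB⟩ := exists_between_of_nodeContent_eq hκ h heq
      have := x.2 _ _ hAC
      have := x.2 _ _ hCB
      have := x.2 _ _ hAD
      have := x.2 _ _ hDB
      have := x.1.injective.ne hne
      simp only [Equiv.apply_symm_apply] at *
      omega
    · exact hij.ne (x.1.symm.injective h)
    · obtain ⟨C, -, -, hBC, hCA, -⟩ := exists_between_of_nodeContent_eq hκ h heq.symm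
      have := (x.2 _ _ hBC).trans (x.2 _ _ hCA)
      simp only [Equiv.apply_symm_apply] at this
      exact this.not_gt hij
  normFactor_eq_zero x i j hj h := by
    refine hq.normFactor_zpow_eq_zero (h.nodeContent_eq_of_covBy fun C hAC hCB => ?_)
    have h₁ := x.2 _ _ hAC
    have h₂ := x.2 _ _ hCB
    simp only [Equiv.apply_symm_apply] at h₁ h₂
    omega

end SeminormalContent

/-! ### Degrees of standard tableaux -/

open Multipartition DiagramNode WithZero

section ChargeFactor

variable {ℓ n : ℕ} {μ : Multipartition ℓ n} {κ : ℕ → ℤ} {K : Type*} [Field K] {q : K}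

/-- The polynomial in `w` whose roots are the quantum contents of the nodes which can start a row
after the rows up to that of `A` have been filled. -/
def chargeFactor (q : K) (ℓ : ℕ) (κ : ℕ → ℤ) (A : Node) (w : K) : K :=
  (w - q ^ nodeContent κ (A.1, A.2.1 + 1, 0)) *
    ∏ l ∈ Finset.Ioo A.1 ℓ, (w - q ^ nodeContent κ (l, 0, 0))

theorem chargeFactor_eq_zero {A B : μ.DiagramNode} (hAB : A < B)
    (h : ∀ C, NorthWest C B → C < A) : chargeFactor q ℓ κ A.1 (q ^ nodeContent κ B.1) = 0 := by
  rcases eq_of_forall_northWest_lt hAB h with h | ⟨hl, h⟩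
  · rw [chargeFactor, h, sub_self, zero_mul]
  · refine mul_eq_zero_of_right _ (Finset.prod_eq_zero (i := B.1.1) ?_ ?_)
    · exact Finset.mem_Ioo.mpr ⟨hl, (lt_of_mem_diagram B.2).1⟩
    · rw [← h, sub_self]

variable {e : ℕ} {v : Valuation K ℤᵐ⁰}

theorem valuation_chargeFactor (hq : IsQuantumParameter v q e) (hκ : IsSeparatedCharge n κ)
    (A : μ.DiagramNode) :
    v (chargeFactor q ℓ κ A.1 (q ^ nodeContent κ A.1)) = exp (-chargeDegree ℓ e κ A.1) := by
  obtain ⟨⟨l, r, c⟩, hA⟩ := A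
  have hA' := lt_of_mem_diagram hA
  have hl (m) (hm : m ∈ Finset.Ioo l ℓ) :
      v (q ^ nodeContent κ (l, r, c) - q ^ nodeContent κ (m, 0, 0)) =
        exp (-zeroIndicator ((κ m : ZMod e) - resNode e κ (l, r, c))) := by
    have := hκ (Finset.mem_Ioo.mp hm).1
    rw [hq.valuation_zpow_sub_zpow (by simp only [nodeContent]; omega), ← zeroIndicator_neg]
    congr! 3
    simp only [nodeContent, resNode]
    push_cast
    ring
  rw [chargeFactor, map_mul, map_prod, Finset.prod_congr rfl hl, prod_exp_neg, chargeDegree,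
    neg_add, exp_add, hq.valuation_zpow_sub_zpow (by simp only [nodeContent]; omega),
    ← zeroIndicator_neg]
  congr! 4
  simp only [nodeContent, resNode]
  push_cast
  ring

end ChargeFactor

section Degree

variable {ℓ n e : ℕ} {μ : Multipartition ℓ n} {κ : ℕ → ℤ}

/-- The degree of a linear extension, which is that of the corresponding standard tableau: the
entry at `A` sees below `A` the charge and the nodes with smaller entries. -/
noncomputable def linExtDegree (e : ℕ) (κ : ℕ → ℤ) (x : LinExt (NorthWest (μ := μ)) n) : ℤ :=
  ∑ A : μ.DiagramNode, chargeDegree ℓ e κ A.1 +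
    ∑ z ∈ inversions x.1, cartanWeight (resNode e κ z.2.1 - resNode e κ z.1.1)

variable {K : Type*} [Field K] {q : K} {v : Valuation K ℤᵐ⁰}

theorem valuation_gramWeight (hq : IsQuantumParameter v q e) (hκ : IsSeparatedCharge n κ)
    (x : LinExt (NorthWest (μ := μ)) n) :
    v (gramWeight q (fun A : μ.DiagramNode => q ^ nodeContent κ A.1) x.1) =
      exp (-∑ z ∈ inversions x.1, cartanWeight (resNode e κ z.2.1 - resNode e κ z.1.1)) := by
  rw [gramWeight, map_prod, ← prod_exp_neg]
  refine Finset.prod_congr rfl fun z hz => hq.valuation_normFactor_zpow ?_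
  obtain ⟨hlt, hx⟩ := (Finset.mem_filter.mp hz).2
  exact nodeContent_add_two_le hκ hlt fun h => (x.2 _ _ h).not_gt hx

theorem exists_mem_contentRing_of_charge (hq : IsQuantumParameter v q e)
    (hκ : IsSeparatedCharge n κ) (μ : Multipartition ℓ n) :
    ∃ p ∈ contentRing v NorthWest n fun A : μ.DiagramNode => q ^ nodeContent κ A.1,
      (∀ x ≠ LinExt.base (rowReading μ) (fun _ _ => NorthWest.lt), p x = 0) ∧
      v (p (.base (rowReading μ) fun _ _ => NorthWest.lt)) =
        exp (-∑ A : μ.DiagramNode, chargeDegree ℓ e κ A.1) := by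
  let ι := rowReading μ
  let u (A : μ.DiagramNode) : K := q ^ nodeContent κ A.1
  let L (k : Fin n) : LinExt (NorthWest (μ := μ)) n → K := fun x => u (x.1.symm k)
  let p : LinExt (NorthWest (μ := μ)) n → K :=
    ∏ k, (L k - fun _ => q ^ nodeContent κ ((ι.symm k).1.1, (ι.symm k).1.2.1 + 1, 0)) *
      ∏ l ∈ Finset.Ioo (ι.symm k).1.1 ℓ, (L k - fun _ => q ^ nodeContent κ (l, 0, 0))
  have hp (x) : p x = ∏ k, chargeFactor q ℓ κ (ι.symm k).1 (u (x.1.symm k)) := by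
    simp only [p, chargeFactor, L, Finset.prod_apply, Pi.mul_apply, Pi.sub_apply]
  have hconst (a : ℤ) : (fun _ => q ^ a) ∈ contentRing v NorthWest n u :=
    const_mem_contentRing (hq.valuation_zpow a).le
  have hL (k) (a : ℤ) : (L k - fun _ => q ^ a) ∈ contentRing v NorthWest n u :=
    sub_mem (content_mem_contentRing k) (hconst a)
  refine ⟨p, prod_mem fun k _ => mul_mem (hL k _) (prod_mem fun l _ => hL k _), fun x hx => ?_, ?_⟩
  · obtain ⟨k, hk, hmin⟩ := LinExt.exists_departure hx
    exact (hp x).trans (Finset.prod_eq_zero (Finset.mem_univ k) (chargeFactor_eq_zero hk hmin))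
  · rw [hp, map_prod, ← prod_exp_neg, ← ι.symm.toEquiv.prod_comp]
    exact Finset.prod_congr rfl fun k _ => valuation_chargeFactor hq hκ (ι.symm k)

theorem sum_linExtDegree_nonneg_of_isSeparatedCharge (he : e ≠ 0) (hκ : IsSeparatedCharge n κ)
    (i : Fin n → ZMod e) :
    0 ≤ ∑ x : LinExt (NorthWest (μ := μ)) n with ∀ k, resNode e κ (x.1.symm k).1 = i k,
      linExtDegree e κ x := by
  have hq := isQuantumParameter_placeAt (Complex.isPrimitiveRoot_exp e he) he
  obtain ⟨p, hp, hp₀, hpv⟩ := exists_mem_contentRing_of_charge hq hκ μ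
  obtain ⟨g, hg, hg₁, hg₀⟩ := exists_mem_contentRing_of_residue (R := NorthWest (μ := μ))
    (fun A => (hq.valuation_zpow (nodeContent κ A.1)).le)
    (res := fun A => resNode e κ A.1) (fun A B hAB => by
      simp only [resNode_eq_intCast_nodeContent] at hAB
      rw [hq.valuation_zpow_sub_zpow (ne_of_apply_ne _ hAB), zeroIndicator,
        if_neg (sub_ne_zero.mpr hAB), neg_zero, exp_zero]) i
  have h := valuation_prod_gramWeight_le_one (isSeminormalContent_zpow_nodeContent hq hκ)
    hq.valuation_eq_one.le (fun A => (hq.valuation_zpow _).le) hp hp₀ hg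
    {x | ∀ k, resNode e κ (x.1.symm k).1 = i k} (by simpa using hg₁) (by simpa using hg₀)
  simp_rw [map_prod, map_mul, hpv, valuation_gramWeight hq hκ, ← exp_add, ← neg_add] at h
  rw [prod_exp_neg, ← exp_zero, exp_le_exp, neg_nonpos] at h
  exact h

theorem sum_linExtDegree_nonneg (he : e ≠ 0) (κ : ℕ → ℤ) (μ : Multipartition ℓ n)
    (i : Fin n → ZMod e) :
    0 ≤ ∑ x : LinExt (NorthWest (μ := μ)) n with ∀ k, resNode e κ (x.1.symm k).1 = i k,
      linExtDegree e κ x := by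
  obtain ⟨κ', hκ', h⟩ := exists_isSeparatedCharge he n κ
  have hdeg (x : LinExt (NorthWest (μ := μ)) n) : linExtDegree e κ' x = linExtDegree e κ x := by
    simp only [linExtDegree, chargeDegree_congr h, resNode_congr h]
  simpa only [resNode_congr h, hdeg] using
    sum_linExtDegree_nonneg_of_isSeparatedCharge (μ := μ) he hκ' i

end Degree

namespace StdTableau

variable {ℓ n : ℕ} (T : StdTableau ℓ n)

variable {T} in
theorem eq_of_shape_eq_of_entry_eq {T' : StdTableau ℓ n} (hshape : T.shape = T'.shape)
    (hentry : T.entry = T'.entry) : T = T' := by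
  cases T
  cases T'
  cases hshape
  cases hentry
  rfl

variable {T} in
theorem node_entry {A : Node} (hA : A ∈ T.shape.diagram) : T.node (T.entry A) = A :=
  T.bijOn.invOn_invFunOn.1 hA

theorem strictMonoOn_entry_row (l r : ℕ) :
    StrictMonoOn (fun c => T.entry (l, r, c)) {c | (l, r, c) ∈ T.shape.diagram} :=
  strictMonoOn_of_lt_succ
    ⟨fun _ _ _ hc _ hd => mem_diagram_of_le hc le_rfl hd.2⟩ fun _ _ _ hc => T.row_inc _ _ _ hc

theorem strictMonoOn_entry_col (l c : ℕ) :
    StrictMonoOn (fun r => T.entry (l, r, c)) {r | (l, r, c) ∈ T.shape.diagram} :=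
  strictMonoOn_of_lt_succ
    ⟨fun _ _ _ hr _ hd => mem_diagram_of_le hr hd.2 le_rfl⟩ fun _ _ _ hr => T.col_inc _ _ _ hr

theorem entry_lt_entry {A B : T.shape.DiagramNode} (h : NorthWest A B) :
    T.entry A.1 < T.entry B.1 := by
  obtain ⟨⟨l, r, c⟩, hA⟩ := A
  obtain ⟨⟨l', r', c'⟩, hB⟩ := B
  obtain ⟨rfl, hlt⟩ : l = l' ∧ (r, c) < (r', c') := h
  have hC := mem_diagram_of_le hB hlt.le.1 le_rfl
  rcases Prod.lt_iff.mp hlt with ⟨hr, hc⟩ | ⟨hr, hc⟩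
  · exact ((T.strictMonoOn_entry_row l r).monotoneOn hA hC hc).trans_lt
      (T.strictMonoOn_entry_col l c' hC hB hr)
  · exact (T.strictMonoOn_entry_row l r hA hC hc).trans_le
      ((T.strictMonoOn_entry_col l c').monotoneOn hC hB hr)

theorem isDiagramSet_restDiag (m : ℕ) : IsDiagramSet ℓ (restDiag T m) := by
  refine ⟨?_, fun A hA => (lt_of_mem_diagram hA.1).1, fun l r c h => ?_, fun l r c h => ?_⟩
  · exact T.shape.diagramFinset.finite_toSet.subset fun A hA => mem_diagramFinset.mpr hA.1
  · exact ⟨mem_diagram_of_le h.1 le_rfl c.le_succ, (T.row_inc l r c h.1).le.trans h.2⟩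
  · exact ⟨mem_diagram_of_le h.1 r.le_succ le_rfl, (T.col_inc l r c h.1).le.trans h.2⟩

theorem removable_restDiag (A : T.shape.DiagramNode) :
    Removable ℓ (restDiag T (T.entry A.1)) A.1 := by
  refine ⟨⟨A.2, le_rfl⟩, ?_⟩
  convert T.isDiagramSet_restDiag (T.entry A.1 - 1) using 1
  ext B
  have hpos : 1 ≤ T.entry A.1 := (T.bijOn.mapsTo A.2).1
  refine ⟨fun ⟨⟨hB, hle⟩, hne⟩ => ⟨hB, ?_⟩, fun ⟨hB, hle⟩ => ⟨⟨hB, by omega⟩, ?_⟩⟩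
  · have := T.bijOn.injOn.ne hB A.2 hne
    omega
  · rintro rfl
    omega

theorem dNode_restDiag {e : ℕ} (he : 2 ≤ e) (κ : ℕ → ℤ) (A : T.shape.DiagramNode) :
    dNode ℓ e κ (restDiag T (T.entry A.1)) A.1 = chargeDegree ℓ e κ A.1 +
      ∑ B : T.shape.DiagramNode with A < B ∧ T.entry B.1 < T.entry A.1,
        cartanWeight (resNode e κ B.1 - resNode e κ A.1) := by
  rw [dNode_eq_chargeDegree_add he κ (T.isDiagramSet_restDiag _) (T.removable_restDiag A)]
  congr 1
  symm
  refine Finset.sum_nbij toNode ?_ (fun B _ C _ => DiagramNode.ext) ?_ fun _ _ => rfl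
  · intro B
    simp only [Finset.mem_filter, Finset.mem_univ, true_and, Set.Finite.mem_toFinset,
      lt_iff_nodeBelow]
    exact fun h => ⟨⟨B.2, h.2.le⟩, h.1⟩
  · intro B hB
    simp only [Finset.coe_filter, Set.Finite.mem_toFinset, Set.mem_ofPred_eq] at hB
    obtain ⟨⟨hB, hle⟩, hAB⟩ := hB
    have hlt : A < ⟨B, hB⟩ := lt_iff_nodeBelow.mpr hAB
    have hne : T.entry B ≠ T.entry A.1 := fun h =>
      hlt.ne' (DiagramNode.ext (T.bijOn.injOn hB A.2 h))
    exact ⟨⟨B, hB⟩, by simpa [hlt] using hle.lt_of_ne hne, rfl⟩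

theorem degE_eq_sum_dNode (e : ℕ) (κ : ℕ → ℤ) : degE e κ T =
    ∑ A : T.shape.DiagramNode, dNode ℓ e κ (restDiag T (T.entry A.1)) A.1 := by
  symm
  refine Finset.sum_nbij (fun A => T.entry A.1) (fun A _ => ?_) (fun A _ B _ h => ?_)
    (fun m hm => ?_) fun A _ => ?_
  · exact Finset.mem_Icc.mpr (T.bijOn.mapsTo A.2)
  · exact DiagramNode.ext (T.bijOn.injOn A.2 B.2 h)
  · obtain ⟨A, hA, rfl⟩ := T.bijOn.surjOn (by simpa using hm)
    exact ⟨⟨A, hA⟩, by simp, rfl⟩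
  · rw [node_entry A.2]
    rfl

end StdTableau

section Transfer

variable {ℓ n : ℕ} {μ : Multipartition ℓ n}

/-- The standard tableau which lists the nodes of `μ` in the order of a linear extension. -/
noncomputable def LinExt.tableau (x : LinExt (NorthWest (μ := μ)) n) : StdTableau ℓ n where
  shape := μ
  entry A := if h : A ∈ μ.diagram then (x.1 ⟨A, h⟩ : ℕ) + 1 else 0
  entry_zero A h := dif_neg h
  bijOn := by
    refine ⟨fun A hA => ?_, fun A hA B hB h => ?_, fun m hm => ?_⟩
    · simp [dif_pos hA]
    · simpa [dif_pos hA, dif_pos hB, Fin.val_inj] using h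
    · obtain ⟨h₁, h₂⟩ := hm
      let A := x.1.symm ⟨m - 1, by omega⟩
      have hA : (x.1 A : ℕ) + 1 = m := by simp [A, h₁]
      exact ⟨A.1, A.2, (dif_pos A.2).trans hA⟩
  row_inc l r c h := by
    have hC := mem_diagram_of_le h le_rfl c.le_succ
    simpa [dif_pos hC, dif_pos h] using
      x.2 ⟨_, hC⟩ ⟨_, h⟩ ⟨rfl, Prod.mk_lt_mk_iff_right.mpr c.lt_succ_self⟩
  col_inc l r c h := by
    have hC := mem_diagram_of_le h r.le_succ le_rfl
    simpa [dif_pos hC, dif_pos h] using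
      x.2 ⟨_, hC⟩ ⟨_, h⟩ ⟨rfl, Prod.mk_lt_mk_iff_left.mpr r.lt_succ_self⟩

namespace LinExt

variable (x : LinExt (NorthWest (μ := μ)) n)

theorem tableau_entry (A : μ.DiagramNode) : x.tableau.entry A.1 = x.1 A + 1 :=
  dif_pos A.2

theorem tableau_node (k : Fin n) : x.tableau.node (k + 1) = (x.1.symm k).1 := by
  have h := tableau_entry x (x.1.symm k)
  rw [Equiv.apply_symm_apply] at h
  rw [← h]
  exact StdTableau.node_entry (T := x.tableau) (x.1.symm k).2

theorem resSeq_tableau (e : ℕ) (κ : ℕ → ℤ) (k : Fin n) :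
    resSeq e κ x.tableau k = resNode e κ (x.1.symm k).1 := by
  rw [resSeq, content, tableau_node, resNode]

theorem degE_tableau {e : ℕ} (he : 2 ≤ e) (κ : ℕ → ℤ) :
    degE e κ x.tableau = linExtDegree e κ x := by
  rw [linExtDegree, inversions, Finset.sum_filter, ← Finset.univ_product_univ, Finset.sum_product,
    ← Finset.sum_add_distrib, StdTableau.degE_eq_sum_dNode]
  refine Finset.sum_congr rfl fun (A : μ.DiagramNode) _ => ?_
  refine (x.tableau.dNode_restDiag he κ A).trans ?_
  rw [Finset.sum_filter]
  refine congrArg _ (Finset.sum_congr rfl fun (B : μ.DiagramNode) _ => ?_)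
  simp only [tableau_entry, Nat.add_lt_add_iff_right, Fin.lt_def]
  congr!

variable (μ) in
theorem tableau_injective : Function.Injective (tableau (μ := μ)) := by
  intro x y h
  refine Subtype.ext (Equiv.ext fun A => Fin.ext ?_)
  have hA := congrFun (congrArg StdTableau.entry h) A.1
  simpa only [tableau_entry, Nat.add_right_cancel_iff] using hA

theorem exists_tableau_eq (T : StdTableau ℓ n) :
    ∃ x : LinExt (NorthWest (μ := T.shape)) n, x.tableau = T := by
  have hT (A : T.shape.DiagramNode) : 1 ≤ T.entry A.1 ∧ T.entry A.1 ≤ n := T.bijOn.mapsTo A.2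
  let f (A : T.shape.DiagramNode) : Fin n := ⟨T.entry A.1 - 1, by have := hT A; omega⟩
  have hf (A) : (f A : ℕ) + 1 = T.entry A.1 := Nat.sub_add_cancel (hT A).1
  have hbij : Function.Bijective f := by
    rw [Fintype.bijective_iff_injective_and_card, card, Fintype.card_fin]
    refine ⟨fun A B h => DiagramNode.ext (T.bijOn.injOn A.2 B.2 ?_), rfl⟩
    rw [← hf, ← hf, h]
  refine ⟨⟨.ofBijective f hbij, fun A B h => ?_⟩, ?_⟩
  · have := T.entry_lt_entry h
    rw [← hf, ← hf] at this
    exact Nat.lt_of_add_lt_add_right this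
  · refine StdTableau.eq_of_shape_eq_of_entry_eq rfl (funext fun A => ?_)
    by_cases hA : A ∈ T.shape.diagram
    · exact (tableau_entry _ ⟨A, hA⟩).trans (hf _)
    · exact (dif_neg hA).trans (T.entry_zero A hA).symm

theorem bijOn_tableau (e : ℕ) (κ : ℕ → ℤ) (μ : Multipartition ℓ n) (i : Fin n → ZMod e) :
    Set.BijOn tableau {x : LinExt (NorthWest (μ := μ)) n | ∀ k, resNode e κ (x.1.symm k).1 = i k}
      {T | T.shape = μ ∧ resSeq e κ T = i} := by
  refine ⟨fun x hx => ⟨rfl, funext fun k => ?_⟩, (tableau_injective μ).injOn, ?_⟩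
  · rw [resSeq_tableau, hx k]
  · rintro T ⟨rfl, rfl⟩
    obtain ⟨x, hx⟩ := exists_tableau_eq T
    exact ⟨x, fun k => by rw [← resSeq_tableau, hx], hx⟩

end LinExt

end Transfer

end Paper

namespace Paper

/-- for every `e ≥ 2` and residue sequence `i ∈ I^n`,
`deg_{e,i}(λ) = Σ_{T ∈ Std(λ), res(T) = i} deg_e(T) ≥ 0`. -/
theorem deg_res_nonneg (n ℓ e : ℕ) (hℓ : 1 ≤ ℓ) (he : 2 ≤ e) (κ : ℕ → ℤ)
    (μ : Multipartition ℓ n) (i : Fin n → ZMod e) :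
    0 ≤ ∑ᶠ T : {T : StdTableau ℓ n // T.shape = μ ∧ resSeq e κ T = i}, degE e κ T.1 := by
  have hsum := sum_linExtDegree_nonneg (by omega : e ≠ 0) κ μ i
  rw [← finsum_mem_coe_finset, Finset.coe_filter_univ, finsum_mem_eq_of_bijOn LinExt.tableau
    (LinExt.bijOn_tableau e κ μ i) fun x _ => (x.degE_tableau he κ).symm] at hsum
  rwa [← finsum_subtype_eq_finsum_cond] at hsum

end Paper
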